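/- The q-Eulerian polynomials satisfy the recurrence A_n^{maj,exc,fix}(q,t,r) = r^n + Σ_{k=0}^{n−2} [n choose k]_q · A_k^{maj,exc,fix}(q,t,r) · tq·[n−k−1]_{tq} for all n ≥ 0 (with A_0 = 1). -/

import Mathlib

/-!
Write `s = t q`. Call the value at an excedance of `σ` barred, order barred letters below unbarred
ones, and let `DEX σ` be the descent set of the resulting word. Then `maj σ` is `exc σ` plus the sum
of `DEX σ` (`maj_eq`), so that `A_n = Σ_σ q^{ΣDEX σ} s^{exc σ} r^{fix σ}`.

By the theory of `P`-partitions, `q^{ΣDEX σ} / ((1 - q)⋯(1 - qⁿ))` is the generating function of the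
weakly increasing sequences `w` that increase strictly on `DEX σ`. With entries in a finite alphabet
`Fin M`, this holds up to a multiple of `q ^ M` (`dvd_sum_compat`), which suffices because `M` is
arbitrary. For a fixed weakly increasing `w`, the permutations compatible with `w` correspond to
words with barred letters and the content of `w` (`sum_perm_eq`): place the letter `w i`, barred if
`i` is an excedance, in position `σ i`; the inverse is stable sorting. The constraints on such a word
are local to the blocks on which `w` is constant: in the block of value `k`, barred letters are at
most `k`, unbarred ones at least `k`, and the first letter is not `k` barred. The excedances are the
barred letters, and the fixed points form the terminal runs of unbarred `k`. Hence the permutations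
compatible with `w` are counted by a coefficient of a product of explicit one-block generating
functions `Zw` (`sum_perm_eq_aco`).

The heart of the matter is then an identity for these coefficients (`sum_aco_mul`):
`Σ_{d + e = c} a_d (s^{|e|} - s) = (1 - s) r^{|c|}`. Convolving the block functions with `(s x_k)^e`
and with `x_k^e` gives `Nw` and `Bw`; the products of these over all blocks telescope, after
multiplication by `x_0 + ⋯ + x_m` and modulo the powers `x_k^{c_k + 1}` (`mul_prod_sub`), and the
linear factor is removed in `coeff_prod_sub`. Summing over the contents of size `n` yields
`Σ_k [n choose k]_q A_k (s^{n-k} - s) = (1 - s) rⁿ` (`dvd_recurrence`). Its term `k = n` is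
`(1 - s) A_n`, its term `k = n - 1` vanishes, and the other terms are
`-(1 - s) [n choose k]_q A_k s [n-k-1]_s`; cancelling `1 - s` gives the recurrence.
-/

open scoped Classical

/-- Descent set of `σ ∈ S_n` (0-based positions). -/
noncomputable def DesSet (n : ℕ) (σ : Equiv.Perm (Fin n)) : Finset ℕ :=
  (Finset.range n).filter fun i =>
    ∃ (h1 : i < n) (h2 : i + 1 < n), σ ⟨i + 1, h2⟩ < σ ⟨i, h1⟩

/-- Major index. -/
noncomputable def maj (n : ℕ) (σ : Equiv.Perm (Fin n)) : ℕ :=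
  ∑ i ∈ DesSet n σ, (i + 1)

/-- Excedance number. -/
noncomputable def exc (n : ℕ) (σ : Equiv.Perm (Fin n)) : ℕ :=
  ((Finset.range n).filter fun i => ∃ h : i < n, i < (σ ⟨i, h⟩ : ℕ)).card

/-- Number of fixed points. -/
noncomputable def fixpts (n : ℕ) (σ : Equiv.Perm (Fin n)) : ℕ :=
  ((Finset.univ : Finset (Fin n)).filter fun i => σ i = i).card

/-- `[m]_x = 1 + x + ⋯ + x^{m−1}`. -/
def qint {R : Type*} [CommSemiring R] (x : R) (m : ℕ) : R :=
  ∑ i ∈ Finset.range m, x ^ i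

/-- Gaussian (q-)binomial coefficient, via the q-Pascal recurrence. -/
def qbinom {R : Type*} [CommSemiring R] (q : R) : ℕ → ℕ → R
  | _, 0 => 1
  | 0, _ + 1 => 0
  | n + 1, k + 1 => qbinom q n k + q ^ (k + 1) * qbinom q n (k + 1)

/-- Three-variable polynomial ring `ℤ[q,t,r]`: `q = X 0`, `t = X 1`, `r = X 2`. -/
abbrev Rqtr : Type := MvPolynomial (Fin 3) ℤ

noncomputable def qv : Rqtr := MvPolynomial.X 0
noncomputable def tv : Rqtr := MvPolynomial.X 1
noncomputable def rv : Rqtr := MvPolynomial.X 2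

/-- `A_n^{maj,exc,fix}(q,t,r)`. -/
noncomputable def qEulerPolyFix (n : ℕ) : Rqtr :=
  ∑ σ : Equiv.Perm (Fin n), qv ^ maj n σ * tv ^ exc n σ * rv ^ fixpts n σ

/-! ### Generating functions of a single block -/

/-- Generating function of the words of length `c` in letters of total weight `L`, where one
distinguished letter has weight `x` and each position of the maximal terminal run of that letter
receives an extra factor `r`. Splitting off the first letter gives the recursion: the extra term
corrects the weight of the word consisting of the distinguished letter only. -/
def Nw {E : Type*} [CommRing E] (r L x : E) : ℕ → E
  | 0 => 1
  | c + 1 => L * Nw r L x c + (r - 1) * r ^ c * x ^ (c + 1)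

/-- The words counted by `Nw` whose first letter is not a second distinguished letter, of weight
`s * x`. -/
def Zw {E : Type*} [CommRing E] (s r L x : E) : ℕ → E
  | 0 => 1
  | c + 1 => Nw r L x (c + 1) - s * x * Nw r L x c

/-- Convolution of `Zw` with the powers of `x`. The analogous convolution with the powers of
`s * x` is `Nw` (see `sum_Zw_mul_pow`). -/
def Bw {E : Type*} [CommRing E] (s r L x : E) (c : ℕ) : E :=
  ∑ d ∈ Finset.range (c + 1), Zw s r L x d * x ^ (c - d)

section Algebra

variable {E : Type*} [CommRing E]

lemma sum_Zw_mul_pow (s r L x : E) (c : ℕ) :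
    ∑ d ∈ Finset.range (c + 1), Zw s r L x d * (s * x) ^ (c - d) = Nw r L x c := by
  induction c with
  | zero => simp [Zw, Nw]
  | succ c ih =>
    rw [Finset.sum_range_succ]
    have : ∑ d ∈ Finset.range (c + 1), Zw s r L x d * (s * x) ^ (c + 1 - d)
        = s * x * ∑ d ∈ Finset.range (c + 1), Zw s r L x d * (s * x) ^ (c - d) := by
      rw [Finset.mul_sum]
      refine Finset.sum_congr rfl fun d hd => ?_
      have : c + 1 - d = (c - d) + 1 := by have := Finset.mem_range.1 hd; omega
      rw [this]; ring
    rw [this, ih]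
    simp [Zw]

lemma Bw_succ (s r L x : E) (c : ℕ) :
    Bw s r L x (c + 1) = x * Bw s r L x c + Zw s r L x (c + 1) := by
  unfold Bw
  rw [Finset.sum_range_succ, Finset.mul_sum]
  congr 1
  · refine Finset.sum_congr rfl fun d hd => ?_
    have : c + 1 - d = (c - d) + 1 := by have := Finset.mem_range.1 hd; omega
    rw [this]; ring
  · simp

/-- The relation between `Bw` and `Nw` that makes the products over all blocks telescope. -/
lemma sub_mul_Bw (s r L x : E) (c : ℕ) :
    (L - x) * Bw s r L x c = (L - s * x) * Nw r L x c - (1 - s) * r ^ c * x ^ (c + 1) := by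
  induction c with
  | zero => simp [Bw, Zw, Nw]; ring
  | succ c ih =>
    rw [Bw_succ, mul_add, mul_left_comm, ih]
    simp only [Zw, Nw]
    ring

/-- The linear form `X - (1 - s) (y₀ + ⋯ + y_{k-1})`. For `X = y₀ + ⋯ + y_m` it interpolates between
`X` at `k = 0` and `s * X` at `k = m + 1`, and `Uw k + s * y_k` is the total weight of the letters
allowed in block `k` (see `Lf_eq_Uw`). -/
def Uw (s X : E) (y : ℕ → E) (k : ℕ) : E := X - (1 - s) * ∑ j ∈ Finset.range k, y j

lemma Uw_succ_mul_Bw (s r X : E) (y : ℕ → E) (k c : ℕ) :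
    Uw s X y (k + 1) * Bw s r (Uw s X y k + s * y k) (y k) c =
      Uw s X y k * Nw r (Uw s X y k + s * y k) (y k) c - (1 - s) * r ^ c * y k ^ (c + 1) := by
  have h := sub_mul_Bw s r (Uw s X y k + s * y k) (y k) c
  have h1 : Uw s X y (k + 1) = Uw s X y k + s * y k - y k := by
    simp only [Uw, Finset.sum_range_succ]; ring
  rw [h1, h]; ring

/-- If `y_k ^ (c_k + 1) = 0` for `k ≥ 1`, the error terms in `Uw_succ_mul_Bw` vanish and the product
over the blocks `1, …, m` telescopes. -/
lemma telescope (s r X : E) (y : ℕ → E) (c : ℕ → ℕ) (m : ℕ)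
    (hy : ∀ k < m, y (k + 1) ^ (c (k + 1) + 1) = 0) :
    Uw s X y (m + 1) *
        ∏ k ∈ Finset.range m, Bw s r (Uw s X y (k + 1) + s * y (k + 1)) (y (k + 1)) (c (k + 1)) =
      Uw s X y 1 *
        ∏ k ∈ Finset.range m, Nw r (Uw s X y (k + 1) + s * y (k + 1)) (y (k + 1)) (c (k + 1)) := by
  induction m with
  | zero => simp
  | succ m ih =>
    have h := Uw_succ_mul_Bw s r X y (m + 1) (c (m + 1))
    rw [hy m (by omega), mul_zero, sub_zero] at h
    rw [Finset.prod_range_succ, Finset.prod_range_succ, mul_left_comm, h, ← mul_assoc, ← mul_assoc,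
      mul_comm _ (Uw s X y (m + 1)), ih (fun k hk => hy k (by omega))]

/-- Adding the block `0`, whose variable is not assumed nilpotent: only its error term survives,
and the closing factor `Uw (m + 1) = s * X` produces the difference on the left. -/
lemma mul_prod_sub (s r X : E) (y : ℕ → E) (c : ℕ → ℕ) (m : ℕ)
    (hy : ∀ k < m, y (k + 1) ^ (c (k + 1) + 1) = 0)
    (hX : X = ∑ j ∈ Finset.range (m + 1), y j) :
    X * (∏ k ∈ Finset.range (m + 1), Nw r (Uw s X y k + s * y k) (y k) (c k) -
        s * ∏ k ∈ Finset.range (m + 1), Bw s r (Uw s X y k + s * y k) (y k) (c k)) =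
      (1 - s) * r ^ c 0 * y 0 ^ (c 0 + 1) *
        ∏ k ∈ Finset.range m, Nw r (Uw s X y (k + 1) + s * y (k + 1)) (y (k + 1)) (c (k + 1)) := by
  have h1 := telescope s r X y c m hy
  have h0 := Uw_succ_mul_Bw s r X y 0 (c 0)
  have hU : Uw s X y (m + 1) = s * X := by rw [Uw, ← hX]; ring
  have hU0 : Uw s X y 0 = X := by simp [Uw]
  rw [Finset.prod_range_succ', Finset.prod_range_succ']
  rw [hU] at h1
  rw [zero_add] at h0
  have h0' : Uw s X y 0 * Nw r (Uw s X y 0 + s * y 0) (y 0) (c 0) =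
    X * Nw r (Uw s X y 0 + s * y 0) (y 0) (c 0) := by rw [← hU0]; simp [Uw]
  generalize ∏ k ∈ Finset.range m, Nw r (Uw s X y (k + 1) + s * y (k + 1)) (y (k + 1)) (c (k + 1)) = PN at *
  generalize ∏ k ∈ Finset.range m, Bw s r (Uw s X y (k + 1) + s * y (k + 1)) (y (k + 1)) (c (k + 1)) = PB at *
  generalize Nw r (Uw s X y 0 + s * y 0) (y 0) (c 0) = N0 at *
  generalize Bw s r (Uw s X y 0 + s * y 0) (y 0) (c 0) = B0 at *
  linear_combination (-B0) * h1 - PN * h0 - PN * h0'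

/-- `Q(-Y)` is read off from the expansion of `a X^{n+1} Q / (X + Y)`: its coefficient of `X^n` is
obtained by downward recursion from infinity, as `f` is a polynomial. -/
lemma coeff_of_add_C_mul (Y : E) (f Q : Polynomial E) (a : E) (n : ℕ)
    (h : (Polynomial.X + Polynomial.C Y) * f =
      Polynomial.C a * Polynomial.X ^ (n + 1) * Q) :
    f.coeff n = a * Q.eval (-Y) := by
  have step : ∀ i, f.coeff (n + i) = a * Q.coeff i - Y * f.coeff (n + i + 1) := by
    intro i
    have := congrArg (fun p => Polynomial.coeff p (n + i + 1)) h
    simp only [add_mul, Polynomial.coeff_add, Polynomial.coeff_X_mul, Polynomial.coeff_C_mul,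
      mul_assoc] at this
    rw [show n + i + 1 = i + (n + 1) by ring, Polynomial.coeff_X_pow_mul] at this
    rw [show n + i + 1 = i + (n + 1) by ring]
    rw [← this]; ring
  have tele : ∀ D, f.coeff n = a * ∑ i ∈ Finset.range D, Q.coeff i * (-Y) ^ i
      + (-Y) ^ D * f.coeff (n + D) := by
    intro D
    induction D with
    | zero => simp
    | succ D ih =>
      rw [ih, step D, Finset.sum_range_succ, show n + (D + 1) = n + D + 1 by ring]
      ring
  rw [tele (f.natDegree + Q.natDegree + 1),
    Polynomial.eval_eq_sum_range' (n := f.natDegree + Q.natDegree + 1) (by omega),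
    Polynomial.coeff_eq_zero_of_natDegree_lt (p := f) (by omega)]
  ring

lemma Nw_self (r x : E) (c : ℕ) : Nw r x x c = r ^ c * x ^ c := by
  induction c with
  | zero => simp [Nw]
  | succ c ih => rw [Nw, ih]; ring

lemma Nw_add_mul (r x z P : E) (hz : z * P = 0) (c : ℕ) :
    Nw r (x + z) x c * P = Nw r x x c * P := by
  induction c with
  | zero => rfl
  | succ c ih =>
    simp only [Nw]
    linear_combination x * ih + Nw r (x + z) x c * hz

/-- In block `k`, the linear form differs from `x_k` only by multiples of the variables `x_j` with
`j > k`; these are killed by the factors `x_j ^ c_j` of the later blocks, so only the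
constant words contribute. -/
lemma prod_Nw_triangular (s r : E) (x : ℕ → E) (c : ℕ → ℕ) (m : ℕ)
    (hx : ∀ k < m, x k ^ (c k + 1) = 0) :
    ∏ k ∈ Finset.range m, Nw r (x k + (1 - s) * ∑ j ∈ Finset.Ico (k + 1) m, x j) (x k) (c k) =
      ∏ k ∈ Finset.range m, r ^ c k * x k ^ c k := by
  have key : ∀ i ≤ m,
      ∏ k ∈ Finset.Ico (m - i) m, Nw r (x k + (1 - s) * ∑ j ∈ Finset.Ico (k + 1) m, x j) (x k) (c k)
        = ∏ k ∈ Finset.Ico (m - i) m, r ^ c k * x k ^ c k := by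
    intro i hi
    induction i with
    | zero => simp
    | succ i ih =>
      have hlt : m - (i + 1) < m := by omega
      have e : m - (i + 1) + 1 = m - i := by omega
      rw [Finset.prod_eq_prod_Ico_succ_bot hlt, Finset.prod_eq_prod_Ico_succ_bot hlt, e,
        ih (by omega), Nw_add_mul, Nw_self]
      rw [mul_assoc, Finset.sum_mul, Finset.sum_eq_zero, mul_zero]
      intro j hj
      rw [← Finset.mul_prod_erase _ _ hj, ← mul_assoc]
      have := hx j (Finset.mem_Ico.1 hj).2
      rw [show x j * (r ^ c j * x j ^ c j) = r ^ c j * x j ^ (c j + 1) by ring, this]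
      simp
  have := key m le_rfl
  simpa using this

end Algebra

/-! ### The coefficient identity -/

/-- Total weight of the letters allowed in block `k`: barred letters `j ≤ k`, of weight `s * x j`,
and unbarred letters `j ≥ k`, of weight `x j`. -/
def Lf {E : Type*} [CommRing E] {M : ℕ} (s : E) (x : Fin M → E) (k : Fin M) : E :=
  s * ∑ j ∈ Finset.Iic k, x j + ∑ j ∈ Finset.Ici k, x j

section Coeff

variable {E F : Type*} [CommRing E] [CommRing F]

lemma map_Nw (φ : E →+* F) (r L x : E) (c : ℕ) : φ (Nw r L x c) = Nw (φ r) (φ L) (φ x) c := by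
  induction c with
  | zero => simp [Nw]
  | succ c ih => simp [Nw, ih]

lemma map_Zw (φ : E →+* F) (s r L x : E) (c : ℕ) :
    φ (Zw s r L x c) = Zw (φ s) (φ r) (φ L) (φ x) c := by
  cases c <;> simp [Zw, map_Nw]

lemma map_Bw (φ : E →+* F) (s r L x : E) (c : ℕ) :
    φ (Bw s r L x c) = Bw (φ s) (φ r) (φ L) (φ x) c := by
  simp [Bw, map_Zw]

lemma map_Lf (φ : E →+* F) {M : ℕ} (s : E) (x : Fin M → E) (k : Fin M) :
    φ (Lf s x k) = Lf (φ s) (fun j => φ (x j)) k := by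
  simp [Lf]

lemma Lf_eq_Uw {M : ℕ} (s : E) (y : ℕ → E) (k : Fin M) :
    Lf s (fun j : Fin M => y j) k = Uw s (∑ j ∈ Finset.range M, y j) y k + s * y k := by
  have h1 : ∑ j ∈ Finset.Iic k, y (j : ℕ) = ∑ j ∈ Finset.range (k + 1), y j := by
    have := Finset.sum_map (Finset.Iic k) Fin.valEmbedding y
    simp only [Fin.valEmbedding_apply] at this
    rw [← this, Fin.map_valEmbedding_Iic]
    refine Finset.sum_congr ?_ fun _ _ => rfl
    ext a; simp
  have h2 : ∑ j ∈ Finset.Ici k, y (j : ℕ) = ∑ j ∈ Finset.Ico (k : ℕ) M, y j := by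
    have := Finset.sum_map (Finset.Ici k) Fin.valEmbedding y
    simp only [Fin.valEmbedding_apply] at this
    rw [← this]
    refine Finset.sum_congr ?_ fun _ _ => rfl
    ext a
    simp only [Finset.mem_map, Finset.mem_Ici, Fin.valEmbedding_apply, Finset.mem_Ico]
    constructor
    · rintro ⟨b, hb, rfl⟩; exact ⟨hb, b.2⟩
    · rintro ⟨h, h'⟩; exact ⟨⟨a, h'⟩, h, rfl⟩
  have h3 := Finset.sum_range_add_sum_Ico y k.2.le
  rw [Lf, Uw, h1, h2, ← h3, Finset.sum_range_succ]
  ring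

/-- The coefficient of `X^c` does not change modulo the powers `X_k ^ (c_k + 1)` with `k ≥ 1`. In that
quotient, seen as a polynomial ring in `X_0`, `mul_prod_sub` gives `X_0 + ⋯ + X_m` times the
polynomial in question; dividing by this linear form amounts to evaluating the cofactor at
`X_0 = -(X_1 + ⋯ + X_m)`, where it becomes triangular. -/
lemma coeff_prod_sub {K : Type*} [CommRing K] (s r : K) (m : ℕ) (c : Fin (m + 1) →₀ ℕ) :
    MvPolynomial.coeff c
      (∏ k, Nw (MvPolynomial.C r) (Lf (MvPolynomial.C s) MvPolynomial.X k)
          (MvPolynomial.X k) (c k) -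
        MvPolynomial.C s * ∏ k, Bw (MvPolynomial.C s) (MvPolynomial.C r)
          (Lf (MvPolynomial.C s) MvPolynomial.X k) (MvPolynomial.X k) (c k)) =
      (1 - s) * r ^ (∑ k, c k) := by
  -- Truncation in the variables other than `X_0`.
  set J : Ideal (MvPolynomial (Fin m) K) := Ideal.span
    ((fun d => MvPolynomial.monomial d (1 : K)) ''
      Set.range fun k : Fin m => Finsupp.single k (c k.succ + 1)) with hJ
  set π := Ideal.Quotient.mk J with hπ
  set θ : MvPolynomial (Fin (m + 1)) K →+* Polynomial (MvPolynomial (Fin m) K ⧸ J) :=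
    (Polynomial.mapRingHom π).comp (MvPolynomial.finSuccEquiv K m).toRingEquiv.toRingHom with hθ
  set x : ℕ → MvPolynomial (Fin m) K ⧸ J :=
    fun k => if h : k < m then π (MvPolynomial.X ⟨k, h⟩) else 0 with hx
  set cc : ℕ → ℕ := fun k => if h : k < m + 1 then c ⟨k, h⟩ else 0 with hcc
  set y : ℕ → Polynomial (MvPolynomial (Fin m) K ⧸ J) :=
    fun k => Nat.casesOn k Polynomial.X fun k => Polynomial.C (x k) with hy
  set σ := π (MvPolynomial.C s) with hσ
  set ρ := π (MvPolynomial.C r) with hρ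
  have hccv : ∀ k : Fin (m + 1), c k = cc k := fun k => by simp only [hcc, k.2, dif_pos]
  have hxv : ∀ k : Fin m, x k = π (MvPolynomial.X k) := fun k => by simp [hx]
  have hθC : ∀ a, θ (MvPolynomial.C a) = Polynomial.C (π (MvPolynomial.C a)) := by
    intro a; simp [hθ, MvPolynomial.finSuccEquiv_apply]
  have hθX : ∀ k : Fin (m + 1), θ (MvPolynomial.X k) = y k := by
    intro k
    refine Fin.cases ?_ (fun k => ?_) k
    · simp [hθ, hy, MvPolynomial.finSuccEquiv_X_zero]
    · simp [hθ, hy, MvPolynomial.finSuccEquiv_X_succ, hxv]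
  have hxpow : ∀ k < m, x k ^ (cc (k + 1) + 1) = 0 := by
    intro k hk
    have : cc (k + 1) = c (Fin.succ ⟨k, hk⟩) := by
      rw [hccv]; rfl
    rw [this, hxv ⟨k, hk⟩, ← map_pow, Ideal.Quotient.eq_zero_iff_mem]
    apply Ideal.subset_span
    exact ⟨_, ⟨⟨k, hk⟩, rfl⟩, by rw [MvPolynomial.X_pow_eq_monomial]⟩
  have hθL : ∀ k : Fin (m + 1), θ (Lf (MvPolynomial.C s) MvPolynomial.X k) =
      Uw (Polynomial.C σ) (∑ j ∈ Finset.range (m + 1), y j) y k + Polynomial.C σ * y k := by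
    intro k
    refine (map_Lf (E := MvPolynomial (Fin (m + 1)) K) (F := Polynomial (MvPolynomial (Fin m) K ⧸ J))
      θ _ _ _).trans ?_
    rw [hθC, ← Lf_eq_Uw]
    simp only [hθX, hσ]
  set f := (∏ k, Nw (MvPolynomial.C r) (Lf (MvPolynomial.C s) MvPolynomial.X k)
          (MvPolynomial.X k) (c k) -
        MvPolynomial.C s * ∏ k, Bw (MvPolynomial.C s) (MvPolynomial.C r)
          (Lf (MvPolynomial.C s) MvPolynomial.X k) (MvPolynomial.X k) (c k)) with hf
  have hθf : θ f = ∏ k ∈ Finset.range (m + 1), Nw (Polynomial.C ρ)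
        (Uw (Polynomial.C σ) (∑ j ∈ Finset.range (m + 1), y j) y k + Polynomial.C σ * y k) (y k) (cc k)
      - Polynomial.C σ * ∏ k ∈ Finset.range (m + 1), Bw (Polynomial.C σ) (Polynomial.C ρ)
        (Uw (Polynomial.C σ) (∑ j ∈ Finset.range (m + 1), y j) y k + Polynomial.C σ * y k)
        (y k) (cc k) := by
    rw [hf, map_sub, map_mul, map_prod, map_prod, Finset.prod_range, Finset.prod_range]
    have hN : ∀ r L x c, θ (Nw r L x c) = Nw (θ r) (θ L) (θ x) c := fun r L x c =>
      map_Nw (E := MvPolynomial (Fin (m + 1)) K) (F := Polynomial (MvPolynomial (Fin m) K ⧸ J)) θ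
        r L x c
    have hB : ∀ s r L x c, θ (Bw s r L x c) = Bw (θ s) (θ r) (θ L) (θ x) c :=
      fun s r L x c => map_Bw (E := MvPolynomial (Fin (m + 1)) K)
        (F := Polynomial (MvPolynomial (Fin m) K ⧸ J)) θ s r L x c
    simp only [hN, hB, hθL, hθX, hθC, hccv, hσ, hρ]
  have hmain := mul_prod_sub (Polynomial.C σ) (Polynomial.C ρ)
    (∑ j ∈ Finset.range (m + 1), y j) y cc m
    (fun k hk => by
      simp only [hy]
      rw [← Polynomial.C_pow, hxpow k hk, Polynomial.C_0]) rfl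
  rw [← hθf] at hmain
  have hsum : ∑ j ∈ Finset.range (m + 1), y j
      = Polynomial.X + Polynomial.C (∑ j ∈ Finset.range m, x j) := by
    rw [Finset.sum_range_succ', map_sum, add_comm]
    rfl
  have hco := coeff_of_add_C_mul (∑ j ∈ Finset.range m, x j) (θ f)
    (∏ k ∈ Finset.range m, Nw (Polynomial.C ρ)
        (Uw (Polynomial.C σ) (∑ j ∈ Finset.range (m + 1), y j) y (k + 1)
          + Polynomial.C σ * y (k + 1)) (y (k + 1)) (cc (k + 1)))
    ((1 - σ) * ρ ^ cc 0) (cc 0) (by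
      rw [← hsum, hmain]
      simp [hy])
  have hev : Polynomial.eval (-∑ j ∈ Finset.range m, x j)
      (∏ k ∈ Finset.range m, Nw (Polynomial.C ρ)
        (Uw (Polynomial.C σ) (∑ j ∈ Finset.range (m + 1), y j) y (k + 1)
          + Polynomial.C σ * y (k + 1)) (y (k + 1)) (cc (k + 1)))
      = ∏ k ∈ Finset.range m, ρ ^ cc (k + 1) * x k ^ cc (k + 1) := by
    rw [← prod_Nw_triangular σ ρ x (fun k => cc (k + 1)) m hxpow, Polynomial.eval_prod]
    refine Finset.prod_congr rfl fun k hk => ?_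
    have hk' := Finset.mem_range.1 hk
    rw [← Polynomial.coe_evalRingHom]
    refine (map_Nw (E := Polynomial (MvPolynomial (Fin m) K ⧸ J))
      (F := MvPolynomial (Fin m) K ⧸ J) (Polynomial.evalRingHom (-∑ j ∈ Finset.range m, x j)) _ _ _ _).trans ?_
    simp only [Polynomial.coe_evalRingHom]
    have e3 := Finset.sum_range_add_sum_Ico x (show k + 1 ≤ m by omega)
    rw [Finset.sum_range_succ] at e3
    have : Polynomial.eval (-∑ j ∈ Finset.range m, x j)
        (Uw (Polynomial.C σ) (∑ j ∈ Finset.range (m + 1), y j) y (k + 1)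
          + Polynomial.C σ * y (k + 1)) = x k + (1 - σ) * ∑ j ∈ Finset.Ico (k + 1) m, x j := by
      rw [hsum, Uw, Finset.sum_range_succ']
      have hy0 : y 0 = Polynomial.X := rfl
      have hyS : ∀ k, y (k + 1) = Polynomial.C (x k) := fun _ => rfl
      simp only [hy0, hyS, ← map_sum]
      simp only [Polynomial.eval_add, Polynomial.eval_sub, Polynomial.eval_mul, Polynomial.eval_C,
        Polynomial.eval_X, Polynomial.eval_one]
      rw [← e3]; ring
    rw [this]
    simp [hy]
  rw [hev] at hco
  have hfin : π ((MvPolynomial.finSuccEquiv K m f).coeff (c 0)) =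
      π (MvPolynomial.monomial c.tail ((1 - s) * r ^ (∑ k, c k))) := by
    have h1 : (θ f).coeff (cc 0) = π ((MvPolynomial.finSuccEquiv K m f).coeff (c 0)) := by
      simp [hθ, hcc]
    rw [← h1, hco, MvPolynomial.monomial_eq, Finsupp.prod_fintype _ _ (by simp)]
    rw [Fin.sum_univ_succ, pow_add, Finset.prod_mul_distrib, ← Finset.prod_pow_eq_pow_sum]
    rw [Finset.prod_range, Finset.prod_range]
    simp only [map_mul, map_sub, map_pow, map_one, map_prod, hσ, hρ, hxv, Finsupp.tail_apply,
      hccv, Fin.val_succ, Fin.val_zero]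
    ring
  -- No monomial of the ideal divides `X^c`, so equality in the quotient gives equality of the
  -- coefficients of `X^c`.
  rw [Ideal.Quotient.eq, hJ, MvPolynomial.mem_ideal_span_monomial_image] at hfin
  have hz : MvPolynomial.coeff c.tail ((MvPolynomial.finSuccEquiv K m f).coeff (c 0) -
      MvPolynomial.monomial c.tail ((1 - s) * r ^ (∑ k, c k))) = 0 := by
    by_contra hne
    obtain ⟨_, ⟨k, rfl⟩, hle⟩ := hfin _ (MvPolynomial.mem_support_iff.2 hne)
    have := hle k
    simp [Finsupp.tail_apply] at this
  rw [MvPolynomial.coeff_sub, MvPolynomial.coeff_monomial, if_pos rfl,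
    MvPolynomial.finSuccEquiv_coeff_coeff, Finsupp.cons_tail] at hz
  exact sub_eq_zero.1 hz

end Coeff

/-! ### Convolution of the coefficients -/

section Convolution

variable {K : Type*} [CommRing K] {M : ℕ}

lemma sum_antidiagonal_prod (f : Fin M → ℕ → ℕ → K) (c : Fin M →₀ ℕ) :
    ∑ p ∈ Finset.HasAntidiagonal.antidiagonal c, ∏ k, f k (p.1 k) (p.2 k) =
      ∏ k, ∑ d ∈ Finset.range (c k + 1), f k d (c k - d) := by
  rw [Finset.prod_univ_sum]
  refine Finset.sum_bij' (fun p _ => fun k => p.1 k)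
    (fun d _ => (Finsupp.equivFunOnFinite.symm d,
      Finsupp.equivFunOnFinite.symm fun k => c k - d k)) ?_ ?_ ?_ ?_ ?_
  · intro p hp
    rw [Finset.HasAntidiagonal.mem_antidiagonal] at hp
    simp only [Fintype.mem_piFinset, Finset.mem_range]
    intro k
    have := DFunLike.congr_fun hp k
    simp only [Finsupp.add_apply] at this
    omega
  · intro d hd
    rw [Finset.HasAntidiagonal.mem_antidiagonal]
    ext k
    have := Finset.mem_range.1 (Fintype.mem_piFinset.1 hd k)
    simp
    omega
  · intro p hp
    rw [Finset.HasAntidiagonal.mem_antidiagonal] at hp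
    ext k
    · simp
    · have := DFunLike.congr_fun hp k
      simp only [Finsupp.add_apply] at this
      simp
      omega
  · intro d hd
    rfl
  · intro p hp
    rw [Finset.HasAntidiagonal.mem_antidiagonal] at hp
    refine Finset.prod_congr rfl fun k _ => ?_
    have := DFunLike.congr_fun hp k
    simp only [Finsupp.add_apply] at this
    rw [show c k - p.1 k = p.2 k by omega]

/-- Coefficient of `X^c` in the product of the generating functions of all blocks, the block `k`
having size `c k`. By `sum_perm_eq_aco` this is a weighted count of permutations. -/
noncomputable def aco (s r : K) (c : Fin M →₀ ℕ) : K :=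
  MvPolynomial.coeff c
    (∏ k, Zw (MvPolynomial.C s) (MvPolynomial.C r) (Lf (MvPolynomial.C s) MvPolynomial.X k)
      (MvPolynomial.X k) (c k))

lemma sum_aco_mul_pow (s r u : K) (c : Fin M →₀ ℕ) :
    ∑ p ∈ Finset.HasAntidiagonal.antidiagonal c, aco s r p.1 * u ^ (∑ k, p.2 k) =
      MvPolynomial.coeff c (∏ k, ∑ d ∈ Finset.range (c k + 1),
        Zw (MvPolynomial.C s) (MvPolynomial.C r) (Lf (MvPolynomial.C s) MvPolynomial.X k)
          (MvPolynomial.X k) d * (MvPolynomial.C u * MvPolynomial.X k) ^ (c k - d)) := by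
  have h := sum_antidiagonal_prod (fun k d e => Zw (MvPolynomial.C s) (MvPolynomial.C r)
    (Lf (MvPolynomial.C s) MvPolynomial.X k) (MvPolynomial.X k) d *
      (MvPolynomial.C u * MvPolynomial.X k) ^ e) c
  rw [← h, MvPolynomial.coeff_sum]
  refine Finset.sum_congr rfl fun p hp => ?_
  rw [Finset.HasAntidiagonal.mem_antidiagonal] at hp
  have hm : ∏ k, (MvPolynomial.C u * MvPolynomial.X k) ^ (p.2 k) =
      MvPolynomial.monomial p.2 (u ^ (∑ k, p.2 k)) := by
    rw [MvPolynomial.monomial_eq, Finsupp.prod_fintype _ _ (by simp)]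
    simp only [mul_pow, Finset.prod_mul_distrib, Finset.prod_pow_eq_pow_sum, map_pow]
  rw [Finset.prod_mul_distrib, hm]
  conv_rhs => rw [← hp]
  rw [MvPolynomial.coeff_mul_monomial, aco]

/-- The recurrence at the level of contents: `u = s` turns every `Zw` into `Nw`, `u = 1` turns it into
`Bw`. -/
lemma sum_aco_mul (s r : K) (c : Fin (M + 1) →₀ ℕ) :
    ∑ p ∈ Finset.HasAntidiagonal.antidiagonal c, aco s r p.1 * (s ^ (∑ k, p.2 k) - s) =
      (1 - s) * r ^ (∑ k, c k) := by
  have h1 := sum_aco_mul_pow s r s c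
  have h2 := sum_aco_mul_pow s r 1 c
  simp only [sum_Zw_mul_pow] at h1
  simp only [one_pow, mul_one, map_one, one_mul] at h2
  rw [← coeff_prod_sub, MvPolynomial.coeff_sub, MvPolynomial.coeff_C_mul, ← h1]
  simp only [Bw, ← h2, mul_sub, Finset.sum_sub_distrib, Finset.mul_sum]
  simp only [mul_comm s]

/-- Sum of `φ` over the contents `c` of size `n`, weighted by the monomials `∏ ω k ^ c k`. -/
noncomputable def Scon (ω : Fin M → K) (φ : (Fin M →₀ ℕ) → K) (n : ℕ) : K :=
  ∑ c ∈ Finset.finsuppAntidiag Finset.univ n, (∏ k, ω k ^ c k) * φ c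

lemma Scon_conv (ω : Fin M → K) (φ ψ : (Fin M →₀ ℕ) → K) (n : ℕ) :
    ∑ p ∈ Finset.HasAntidiagonal.antidiagonal n, Scon ω φ p.1 * Scon ω ψ p.2 =
      Scon ω (fun c => ∑ p ∈ Finset.HasAntidiagonal.antidiagonal c, φ p.1 * ψ p.2) n := by
  simp only [Scon, Finset.sum_mul_sum, ← Finset.sum_product']
  simp only [Finset.mul_sum]
  rw [Finset.sum_sigma', Finset.sum_sigma']
  refine Finset.sum_bij' (fun x _ => ⟨x.2.1 + x.2.2, x.2⟩)
    (fun y _ => ⟨(∑ k, y.2.1 k, ∑ k, y.2.2 k), y.2⟩) ?_ ?_ ?_ ?_ ?_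
  · rintro ⟨⟨i, j⟩, d, e⟩ h
    simp [Finset.mem_finsuppAntidiag, Finset.sum_add_distrib] at h ⊢
    exact (congrArg₂ (· + ·) h.2.1 h.2.2).trans h.1
  · rintro ⟨c, d, e⟩ h
    simp [Finset.mem_finsuppAntidiag] at h ⊢
    rw [← h.1, ← h.2, ← Finset.sum_add_distrib]
    rfl
  · rintro ⟨⟨i, j⟩, d, e⟩ h
    simp [Finset.mem_finsuppAntidiag] at h
    obtain ⟨h1, h2, h3⟩ := h
    subst h2; subst h3; rfl
  · rintro ⟨c, d, e⟩ h
    simp [Finset.mem_finsuppAntidiag] at h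
    obtain ⟨h1, h2⟩ := h
    subst h2; rfl
  · rintro ⟨⟨i, j⟩, d, e⟩ h
    simp only [Finsupp.add_apply, pow_add, Finset.prod_mul_distrib]
    ring

lemma Scon_aco (s r : K) (ω : Fin (M + 1) → K) (n : ℕ) :
    ∑ p ∈ Finset.HasAntidiagonal.antidiagonal n,
        Scon ω (aco s r) p.1 * ((s ^ p.2 - s) * Scon ω (fun _ => 1) p.2) =
      (1 - s) * r ^ n * Scon ω (fun _ => 1) n := by
  have h := Scon_conv ω (aco s r) (fun c => s ^ (∑ k, c k) - s) n
  have h1 : ∀ i, Scon ω (fun c => s ^ (∑ k, c k) - s) i = (s ^ i - s) * Scon ω (fun _ => 1) i := by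
    intro i
    simp only [Scon, Finset.mul_sum]
    refine Finset.sum_congr rfl fun c hc => ?_
    rw [(Finset.mem_finsuppAntidiag.1 hc).1]; ring
  simp only [h1, sum_aco_mul] at h
  rw [h]
  simp only [Scon, Finset.mul_sum]
  refine Finset.sum_congr rfl fun c hc => ?_
  rw [(Finset.mem_finsuppAntidiag.1 hc).1]; ring

end Convolution

/-! ### Generating functions of compatible sequences -/

/-- `w` is weakly increasing, and increases strictly at each position of `S` (a `P`-partition of a
chain). -/
def Compat {n M : ℕ} (S : Finset ℕ) (w : Fin n → Fin M) : Prop :=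
  ∀ (i : ℕ) (h : i + 1 < n), w ⟨i, by omega⟩ ≤ w ⟨i + 1, h⟩ ∧
    (i ∈ S → w ⟨i, by omega⟩ < w ⟨i + 1, h⟩)

section PPartition

variable {K : Type*} [CommRing K]

/-- Generating function of the sequences compatible with `S` whose last entry (if there is one) is
less than `b`; the weight of an entry `a` is `q ^ (M - 1 - a)`. -/
noncomputable def Tsum (q : K) (M : ℕ) (S : Finset ℕ) (n b : ℕ) : K :=
  ∑ w : Fin n → Fin M,
    if Compat S w ∧ ∀ i : Fin n, (i : ℕ) + 1 = n → (w i : ℕ) < b then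
      ∏ i, q ^ (M - 1 - (w i : ℕ)) else 0

lemma compat_snoc {n M : ℕ} (S : Finset ℕ) (w : Fin n → Fin M) (a : Fin M) :
    Compat S (Fin.snoc w a : Fin (n + 1) → Fin M) ↔
      Compat S w ∧ ∀ i : Fin n, (i : ℕ) + 1 = n →
        (w i : ℕ) < a + 1 - if n - 1 ∈ S then 1 else 0 := by
  have hlt : ∀ (i : ℕ) (h : i < n), (Fin.snoc w a : Fin (n + 1) → Fin M) ⟨i, by omega⟩ = w ⟨i, h⟩ :=
    fun i h => by
      have := Fin.snoc_castSucc (α := fun _ => Fin M) a w ⟨i, h⟩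
      simpa using this
  have hlast : ∀ (h : n < n + 1), (Fin.snoc w a : Fin (n + 1) → Fin M) ⟨n, h⟩ = a :=
    fun i => Fin.snoc_last (α := fun _ => Fin M) a w
  constructor
  · intro H
    refine ⟨fun i h => ?_, fun i hi => ?_⟩
    · have := H i (by omega)
      rwa [hlt i (by omega), hlt (i + 1) h] at this
    · have := H i (by omega)
      rw [hlt i i.2] at this
      have e : (⟨(i : ℕ) + 1, by omega⟩ : Fin (n + 1)) = ⟨n, by omega⟩ := by ext; exact hi
      rw [e, hlast] at this
      have e2 : n - 1 = i := by omega
      rw [e2]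
      obtain ⟨h1, h2⟩ := this
      simp only [Fin.eta, Fin.le_def, Fin.lt_def] at h1 h2
      split_ifs with h3
      · have := h2 h3; omega
      · omega
  · rintro ⟨H1, H2⟩ i h
    by_cases hi : i + 1 < n
    · rw [hlt i (by omega), hlt (i + 1) hi]
      exact H1 i hi
    · have hin : i + 1 = n := by omega
      have e : (⟨i + 1, h⟩ : Fin (n + 1)) = ⟨n, by omega⟩ := by ext; exact hin
      rw [hlt i (by omega), e, hlast]
      have := H2 ⟨i, by omega⟩ hin
      have e2 : n - 1 = i := by omega
      rw [e2] at this
      simp only [Fin.le_def, Fin.lt_def]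
      constructor
      · split_ifs at this <;> omega
      · intro h3
        rw [if_pos h3] at this; omega

lemma Tsum_succ (q : K) (M : ℕ) (S : Finset ℕ) (n b : ℕ) (hb : b ≤ M) :
    Tsum q M S (n + 1) b = ∑ a ∈ Finset.range b,
      q ^ (M - 1 - a) * Tsum q M S n (a + 1 - if n - 1 ∈ S then 1 else 0) := by
  have h1 : Tsum q M S (n + 1) b = ∑ a : Fin M, if (a : ℕ) < b then
      q ^ (M - 1 - (a : ℕ)) * Tsum q M S n ((a : ℕ) + 1 - if n - 1 ∈ S then 1 else 0) else 0 := by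
    rw [Tsum, ← (Fin.snocEquiv fun _ : Fin (n + 1) => Fin M).sum_comp, Fintype.sum_prod_type]
    refine Finset.sum_congr rfl fun a _ => ?_
    have hs : ∀ w : Fin n → Fin M, (Fin.snocEquiv fun _ : Fin (n + 1) => Fin M) (a, w) =
      (Fin.snoc w a : Fin (n + 1) → Fin M) := fun w => rfl
    have hbd : ∀ w : Fin n → Fin M, (∀ i : Fin (n + 1), (i : ℕ) + 1 = n + 1 →
        ((Fin.snoc w a : Fin (n + 1) → Fin M) i : ℕ) < b) ↔ (a : ℕ) < b := by
      intro w
      constructor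
      · intro h; simpa using h (Fin.last n) (by simp)
      · intro h i hi
        have : i = Fin.last n := by ext; simpa using hi
        rw [this]; simpa using h
    simp only [hs, hbd, compat_snoc, Fin.prod_univ_castSucc, Fin.snoc_castSucc, Fin.snoc_last]
    by_cases hab : (a : ℕ) < b
    · simp only [hab, and_true, if_true, Tsum, Finset.mul_sum, mul_ite, mul_zero]
      simp only [mul_comm]
    · simp [hab]
  rw [h1, ← Finset.sum_range fun a => if a < b then
      q ^ (M - 1 - a) * Tsum q M S n (a + 1 - if n - 1 ∈ S then 1 else 0) else 0,
    ← Finset.sum_filter]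
  refine Finset.sum_congr ?_ fun _ _ => rfl
  ext a; simp; omega

/-- The `q`-Pochhammer symbol `(1 - q)(1 - q²)⋯(1 - qⁿ)`. -/
def qpoch (q : K) (n : ℕ) : K := ∏ i ∈ Finset.range n, (1 - q ^ (i + 1))

/-- Up to terms divisible by `q ^ M`, which only see the truncation of the alphabet, the generating
function is `q` to the sum of `S` (positions counted from `1`), divided by `(1 - q)⋯(1 - qⁿ)`. The
factor `q ^ (n * (M - b))` is the shift of all entries by the bound. -/
lemma dvd_Tsum (q : K) (M : ℕ) (S : Finset ℕ) (n b : ℕ) (hb : b ≤ M) :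
    q ^ M ∣ qpoch q n * Tsum q M S n b -
      q ^ (n * (M - b) + ∑ i ∈ Finset.range (n - 1), if i ∈ S then i + 1 else 0) := by
  induction n generalizing b with
  | zero => simp [qpoch, Tsum, Compat]
  | succ n ih =>
    set ε := if n - 1 ∈ S then 1 else 0 with hε
    have hε1 : ε ≤ 1 := by rw [hε]; split_ifs <;> omega
    set μ := ∑ i ∈ Finset.range (n - 1), if i ∈ S then i + 1 else 0 with hμ
    have hμ' : (∑ i ∈ Finset.range (n + 1 - 1), if i ∈ S then i + 1 else 0) = μ + n * ε := by
      cases n with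
      | zero => simp [hμ]
      | succ n =>
        rw [hμ, hε]
        simp only [Nat.add_sub_cancel, Finset.sum_range_succ]
        split_ifs <;> simp
    have hgeo : ∀ b ≤ M, (1 - q ^ (n + 1)) * ∑ a ∈ Finset.range b, q ^ ((n + 1) * (M - 1 - a)) =
        q ^ ((n + 1) * (M - b)) - q ^ ((n + 1) * M) := by
      intro b hb
      induction b with
      | zero => simp
      | succ b ihb =>
        rw [Finset.sum_range_succ, mul_add, ihb (by omega)]
        have : M - b = (M - 1 - b) + 1 := by omega
        have h2 : M - (b + 1) = M - 1 - b := by omega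
        rw [this, h2]; ring
    have key : qpoch q (n + 1) * Tsum q M S (n + 1) b -
        q ^ ((n + 1) * (M - b) + (μ + n * ε)) =
        (∑ a ∈ Finset.range b, q ^ (M - 1 - a) * (1 - q ^ (n + 1)) *
          (qpoch q n * Tsum q M S n (a + 1 - ε) - q ^ (n * (M - (a + 1 - ε)) + μ)))
        - q ^ (μ + n * ε + n * M) * q ^ M := by
      have hs : ∑ a ∈ Finset.range b, q ^ (M - 1 - a) * (1 - q ^ (n + 1)) *
          q ^ (n * (M - (a + 1 - ε)) + μ) = q ^ (μ + n * ε) *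
            ((1 - q ^ (n + 1)) * ∑ a ∈ Finset.range b, q ^ ((n + 1) * (M - 1 - a))) := by
        rw [Finset.mul_sum, Finset.mul_sum]
        refine Finset.sum_congr rfl fun a ha => ?_
        have ha := Finset.mem_range.1 ha
        have : M - (a + 1 - ε) = (M - 1 - a) + ε := by omega
        rw [this]; ring
      simp only [mul_sub, Finset.sum_sub_distrib]
      simp only [mul_sub] at hs hgeo
      rw [hs, hgeo b hb, Tsum_succ q M S n b hb, qpoch, Finset.prod_range_succ, ← qpoch,
        Finset.mul_sum]
      rw [← hε]
      have : ∀ a, qpoch q n * (1 - q ^ (n + 1)) * (q ^ (M - 1 - a) * Tsum q M S n (a + 1 - ε)) =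
        (q ^ (M - 1 - a) * 1 - q ^ (M - 1 - a) * q ^ (n + 1)) *
          (qpoch q n * Tsum q M S n (a + 1 - ε)) := fun a => by ring
      simp only [this]
      ring
    rw [hμ', key]
    refine dvd_sub (Finset.dvd_sum fun a ha => ?_) (Dvd.intro_left _ rfl)
    have ha := Finset.mem_range.1 ha
    exact Dvd.dvd.mul_left (ih _ (by omega)) _

lemma dvd_sum_compat (q : K) (M : ℕ) (S : Finset ℕ) (n : ℕ) :
    q ^ M ∣ qpoch q n * (∑ w : Fin n → Fin M,
        if Compat S w then ∏ i, q ^ (M - 1 - (w i : ℕ)) else 0) -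
      q ^ (∑ i ∈ Finset.range (n - 1), if i ∈ S then i + 1 else 0) := by
  have h := dvd_Tsum q M S n M le_rfl
  simpa [Tsum] using h

end PPartition

/-! ### The major index in terms of excedances -/

section MajorIndex

/-- `false` if `i` is an excedance of `σ` (a barred letter), `true` otherwise (unbarred). -/
noncomputable def notExc {n : ℕ} (σ : Equiv.Perm (Fin n)) (i : Fin n) : Bool := decide (¬ i < σ i)

/-- Descents of the word `σ` in which the excedance values are barred and every barred letter is
smaller than every unbarred one. As in `DesSet`, positions are counted from `0`. -/
noncomputable def DEX {n : ℕ} (σ : Equiv.Perm (Fin n)) : Finset ℕ :=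
  (Finset.range n).filter fun i => ∃ (h1 : i < n) (h2 : i + 1 < n),
    toLex (notExc σ ⟨i + 1, h2⟩, σ ⟨i + 1, h2⟩) < toLex (notExc σ ⟨i, h1⟩, σ ⟨i, h1⟩)

lemma mem_DEX {n : ℕ} (σ : Equiv.Perm (Fin n)) {i : ℕ} (h : i + 1 < n) :
    i ∈ DEX σ ↔ toLex (notExc σ ⟨i + 1, h⟩, σ ⟨i + 1, h⟩) <
      toLex (notExc σ ⟨i, by omega⟩, σ ⟨i, by omega⟩) := by
  simp only [DEX, Finset.mem_filter, Finset.mem_range]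
  constructor
  · rintro ⟨_, _, _, h⟩; exact h
  · intro h'; exact ⟨by omega, by omega, h, h'⟩

lemma mem_DesSet {n : ℕ} (σ : Equiv.Perm (Fin n)) {i : ℕ} (h : i + 1 < n) :
    i ∈ DesSet n σ ↔ σ ⟨i + 1, h⟩ < σ ⟨i, by omega⟩ := by
  simp only [DesSet, Finset.mem_filter, Finset.mem_range]
  constructor
  · rintro ⟨_, _, _, h⟩; exact h
  · intro h'; exact ⟨by omega, by omega, h, h'⟩

lemma des_add_exc {n : ℕ} (σ : Equiv.Perm (Fin n)) {i : ℕ} (h : i + 1 < n) :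
    (if i ∈ DesSet n σ then 1 else 0) +
        (if (⟨i + 1, h⟩ : Fin n) < σ ⟨i + 1, h⟩ then 1 else 0) =
      (if i ∈ DEX σ then 1 else 0) +
        (if (⟨i, by omega⟩ : Fin n) < σ ⟨i, by omega⟩ then 1 else 0) := by
  simp only [mem_DesSet σ h, mem_DEX σ h, Prod.Lex.toLex_lt_toLex, notExc, Fin.lt_def]
  have hne : (σ ⟨i + 1, h⟩ : ℕ) ≠ σ ⟨i, by omega⟩ := fun hh => by
    simpa using σ.injective (Fin.ext hh)
  generalize hb : (σ ⟨i + 1, h⟩ : ℕ) = b at hne ⊢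
  generalize ha : (σ ⟨i, by omega⟩ : ℕ) = a at hne ⊢
  by_cases h1 : i < a <;> by_cases h2 : i + 1 < b
  · simp [h1, h2]
  · have : b < a := by omega
    simp [h1, h2, this]
  · simp [h1, h2]; omega
  · simp [h1, h2]

/-- The sum over `DEX` is `maj - exc`. Multiplying `des_add_exc` by `i + 1` and summing by parts, each
excedance contributes `1`; the last position is never an excedance. -/
lemma maj_eq {n : ℕ} (σ : Equiv.Perm (Fin n)) :
    maj n σ = exc n σ + ∑ i ∈ Finset.range (n - 1), if i ∈ DEX σ then i + 1 else 0 := by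
  let e : ℕ → ℕ := fun i => if ∃ h : i < n, i < (σ ⟨i, h⟩ : ℕ) then 1 else 0
  have he : ∀ i (h : i < n), e i = if (⟨i, h⟩ : Fin n) < σ ⟨i, h⟩ then 1 else 0 := by
    intro i h
    simp only [e, Fin.lt_def, h, exists_true_left]
  have key : ∀ m ≤ n - 1, (∑ i ∈ Finset.range m, if i ∈ DesSet n σ then i + 1 else 0) + m * e m =
      (∑ i ∈ Finset.range m, e i) + ∑ i ∈ Finset.range m, if i ∈ DEX σ then i + 1 else 0 := by
    intro m hm
    induction m with
    | zero => simp
    | succ m ih =>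
      have ih := ih (by omega)
      have hb := des_add_exc σ (i := m) (by omega)
      rw [← he, ← he] at hb
      simp only [Finset.sum_range_succ]
      have hd : ∀ (p : Prop) [Decidable p], (if p then m + 1 else 0) = (m + 1) * if p then 1 else 0 := by
        intro p _; split_ifs <;> simp
      rw [hd, hd]
      have := congrArg ((m + 1) * ·) hb
      simp only [mul_add] at this
      linarith
  have hlast : (n - 1) * e (n - 1) = 0 ∧ ∑ i ∈ Finset.range n, e i = ∑ i ∈ Finset.range (n - 1), e i := by
    cases n with
    | zero => simp
    | succ n =>
      have h0 : e n = 0 := by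
        rw [he n (by omega), if_neg]
        simp only [Fin.lt_def]; omega
      simp [Finset.sum_range_succ, h0]
  have h1 : maj n σ = ∑ i ∈ Finset.range (n - 1), if i ∈ DesSet n σ then i + 1 else 0 := by
    rw [maj, ← Finset.sum_filter]
    refine Finset.sum_congr ?_ fun _ _ => rfl
    ext i
    simp only [DesSet, Finset.mem_filter, Finset.mem_range]
    constructor
    · rintro ⟨h1, h2, h3, h4⟩; exact ⟨by omega, h1, h2, h3, h4⟩
    · exact fun h => h.2
  have h2 : exc n σ = ∑ i ∈ Finset.range n, e i := by
    simp only [exc, e, Finset.card_filter]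
  have := key (n - 1) le_rfl
  rw [h1, h2, hlast.2, ← this, hlast.1, add_zero]

lemma compat_DEX_iff {n M : ℕ} (σ : Equiv.Perm (Fin n)) (w : Fin n → Fin M) :
    Compat (DEX σ) w ↔ StrictMono fun i => toLex (w i, toLex (notExc σ i, σ i)) := by
  have hadj : Compat (DEX σ) w ↔ ∀ (i : ℕ) (h : i + 1 < n),
      toLex (w ⟨i, by omega⟩, toLex (notExc σ ⟨i, by omega⟩, σ ⟨i, by omega⟩)) <
        toLex (w ⟨i + 1, h⟩, toLex (notExc σ ⟨i + 1, h⟩, σ ⟨i + 1, h⟩)) := by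
    refine forall_congr' fun i => forall_congr' fun h => ?_
    rw [mem_DEX σ h, Prod.Lex.toLex_lt_toLex (α := Fin M)]
    have hne : toLex (notExc σ ⟨i, by omega⟩, σ ⟨i, by omega⟩) ≠
        toLex (notExc σ ⟨i + 1, h⟩, σ ⟨i + 1, h⟩) := by
      intro hh
      have := (Prod.ext_iff.1 (toLex.injective hh)).2
      have := congrArg Fin.val (σ.injective this)
      simp at this
    rcases lt_or_gt_of_ne hne with hlt | hlt
    · simp only [hlt, hlt.not_gt, false_imp_iff, and_true, le_iff_lt_or_eq]
    · simp only [hlt, hlt.not_gt, true_imp_iff, and_false, or_false]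
      exact ⟨fun h => h.2, fun h => ⟨h.le, h⟩⟩
  rw [hadj]
  cases n with
  | zero => exact ⟨fun _ a => a.elim0, fun _ i h => by omega⟩
  | succ n =>
    rw [Fin.strictMono_iff_lt_succ]
    exact ⟨fun H i => H i (by omega), fun H i h => H ⟨i, by omega⟩⟩

end MajorIndex

/-! ### Permutations as words with barred letters -/

section Words

variable {n M : ℕ}

/-- The words that encode a permutation relative to the weakly increasing sequence `w`. A letter
`(j, false)` is barred, `(j, true)` is unbarred. In the block of positions with `w = k`, barred
letters are at most `k`, unbarred letters are at least `k`, and the first letter is not `k`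
barred. -/
def Allowed (w : Fin n → Fin M) (g : Fin n → Fin M × Bool) : Prop :=
  ∀ v, ((g v).2 = false → (g v).1 ≤ w v) ∧ ((g v).2 = true → w v ≤ (g v).1) ∧
    ((∀ u, w u = w v → v ≤ u) → g v ≠ (w v, false))

/-- From `v` to the end of its block, all letters are the unbarred value of the block. -/
def Trailing (w : Fin n → Fin M) (g : Fin n → Fin M × Bool) (v : Fin n) : Prop :=
  ∀ u, v ≤ u → w u = w v → g u = (w u, true)

/-- The word encoding `σ`: the letter in position `σ i` is `w i`, barred if `i` is an excedance. -/
noncomputable def wordOf (w : Fin n → Fin M) (σ : Equiv.Perm (Fin n)) (v : Fin n) : Fin M × Bool :=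
  (w (σ.symm v), notExc σ (σ.symm v))

/-- The content of a sequence: the number of occurrences of each value. -/
noncomputable def cont (f : Fin n → Fin M) : Fin M →₀ ℕ := ∑ i, Finsupp.single (f i) 1

lemma cont_comp (f : Fin n → Fin M) (σ : Equiv.Perm (Fin n)) : cont (fun i => f (σ i)) = cont f :=
  Equiv.sum_comp σ fun i => Finsupp.single (f i) 1

lemma cont_apply (f : Fin n → Fin M) (k : Fin M) :
    cont f k = (Finset.univ.filter fun i => f i = k).card := by
  rw [cont, Finset.card_filter, Finsupp.finsetSum_apply]
  simp only [Finsupp.single_apply]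

lemma eq_of_cont_eq {f w : Fin n → Fin M} (hf : Monotone f) (hw : Monotone w)
    (h : cont f = cont w) : f = w := by
  have hp : (List.ofFn f).Perm (List.ofFn w) := by
    rw [← Multiset.coe_eq_coe, ← Fin.univ_val_map, ← Fin.univ_val_map]
    ext k
    have := DFunLike.congr_fun h k
    rw [cont_apply, cont_apply] at this
    rw [Multiset.count_map, Multiset.count_map]
    simpa only [Finset.card_def, Finset.filter_val, eq_comm] using this
  have := List.Perm.eq_of_sortedLE hf.sortedLE_ofFn hw.sortedLE_ofFn hp
  exact List.ofFn_injective this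

lemma notExc_false {σ : Equiv.Perm (Fin n)} {i : Fin n} : notExc σ i = false ↔ i < σ i := by
  simp [notExc]

lemma notExc_true {σ : Equiv.Perm (Fin n)} {i : Fin n} : notExc σ i = true ↔ σ i ≤ i := by
  simp [notExc]

lemma wordOf_apply (w : Fin n → Fin M) (σ : Equiv.Perm (Fin n)) (i : Fin n) :
    wordOf w σ (σ i) = (w i, notExc σ i) := by
  simp [wordOf]

lemma allowed_wordOf {w : Fin n → Fin M} (hw : Monotone w) (σ : Equiv.Perm (Fin n)) :
    Allowed w (wordOf w σ) := by
  intro v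
  obtain ⟨i, rfl⟩ := σ.surjective v
  rw [wordOf_apply]
  refine ⟨fun h => hw (notExc_false.1 h).le, fun h => hw (notExc_true.1 h), fun h he => ?_⟩
  simp only [Prod.mk.injEq] at he
  exact absurd (h i he.1) (not_le.2 (notExc_false.1 he.2))

/-- The permutation encoded by a word: list the positions of the word by increasing letter, and
positions of equal letters from left to right. -/
noncomputable def permOf (g : Fin n → Fin M × Bool) : Equiv.Perm (Fin n) :=
  Tuple.sort fun v => toLex (g v)

lemma permOf_eq_iff {g : Fin n → Fin M × Bool} {σ : Equiv.Perm (Fin n)} :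
    σ = permOf g ↔ StrictMono fun i =>
      toLex ((g (σ i)).1, toLex ((g (σ i)).2, σ i)) := by
  rw [permOf, Tuple.eq_sort_iff]
  constructor
  · rintro ⟨h1, h2⟩ i j hij
    have h := h1 hij.le
    simp only [Function.comp, Prod.Lex.toLex_le_toLex] at h
    simp only [Prod.Lex.toLex_lt_toLex]
    rcases h with h | ⟨h, h'⟩
    · exact Or.inl h
    · refine Or.inr ⟨h, ?_⟩
      rcases h'.lt_or_eq with h3 | h3
      · exact Or.inl h3
      · exact Or.inr ⟨h3, h2 i j hij (congrArg toLex (Prod.ext h h3))⟩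
  · intro H
    refine ⟨?_, fun i j hij he => ?_⟩
    · intro i j hij
      rcases hij.lt_or_eq with h | rfl
      · have := H h
        simp only [Prod.Lex.toLex_lt_toLex] at this
        simp only [Function.comp, Prod.Lex.toLex_le_toLex]
        rcases this with h | ⟨h, h' | ⟨h', _⟩⟩
        · exact Or.inl h
        · exact Or.inr ⟨h, h'.le⟩
        · exact Or.inr ⟨h, h'.le⟩
      · exact le_rfl
    · have := H hij
      have he := toLex.injective he
      simpa [Prod.Lex.toLex_lt_toLex, he] using this

lemma permOf_wordOf {w : Fin n → Fin M} {σ : Equiv.Perm (Fin n)}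
    (h : StrictMono fun i => toLex (w i, toLex (notExc σ i, σ i))) :
    permOf (wordOf w σ) = σ := by
  symm
  rw [permOf_eq_iff]
  simpa only [wordOf_apply] using h

lemma permOf_fst {w : Fin n → Fin M} (hw : Monotone w) {g : Fin n → Fin M × Bool}
    (hc : cont (fun v => (g v).1) = cont w) (i : Fin n) : (g (permOf g i)).1 = w i := by
  have H : Monotone fun i => (g (permOf g i)).1 := by
    have h := permOf_eq_iff.1 (rfl : permOf g = permOf g)
    intro i j hij
    have := h.monotone hij
    simp only [Prod.Lex.toLex_le_toLex] at this
    rcases this with h | h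
    · exact h.le
    · exact h.1.le
  exact congrFun (eq_of_cont_eq H hw ((cont_comp (fun v => (g v).1) (permOf g)).trans hc)) i

lemma strictMono_cases {w : Fin n → Fin M} {b : Fin n → Bool} {σ : Equiv.Perm (Fin n)}
    (H : StrictMono fun i => toLex (w i, toLex (b i, σ i))) {i j : Fin n} (hij : i < j) :
    w i < w j ∨ (w i = w j ∧ (b i < b j ∨ (b i = b j ∧ σ i < σ j))) := by
  simpa [Prod.Lex.toLex_lt_toLex] using H hij

/-- The bars of an allowed word mark exactly the excedances of the permutation. Since the `i`-th
smallest letter is `w i`, this is clear when the `i`-th letter lies in a block other than its own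
value; the remaining case is an induction along the block. -/
lemma notExc_permOf {w : Fin n → Fin M} (hw : Monotone w) {g : Fin n → Fin M × Bool}
    (hA : Allowed w g) (hc : cont (fun v => (g v).1) = cont w) (i : Fin n) :
    notExc (permOf g) i = (g (permOf g i)).2 := by
  have hf := permOf_fst hw hc
  have H := permOf_eq_iff.1 (rfl : permOf g = permOf g)
  simp only [hf] at H
  set σ := permOf g
  have hbw : ∀ a b c : Fin n, a ≤ b → b ≤ c → w a = w c → w b = w c := fun a b c h1 h2 h3 =>
    le_antisymm (hw h2) (h3 ▸ hw h1)
  cases hb : (g (σ i)).2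
  · rw [notExc_false]
    have hbf : ∀ p ≤ i, w p = w i → (g (σ p)).2 = false := by
      intro p hp hpw
      rcases hp.lt_or_eq with h | rfl
      · rcases strictMono_cases H h with h1 | ⟨_, h1 | ⟨h1, _⟩⟩
        · exact absurd hpw h1.ne
        · rw [hb] at h1; exact absurd h1 (by simp)
        · rw [h1, hb]
      · exact hb
    -- From the start of the block up to `i`, the sorted letters are all equal, so `σ` increases there;
    -- it moves the first position up because the block does not begin with its barred value.
    have key : ∀ m : ℕ, ∀ p : Fin n, (p : ℕ) = m → w p = w i → p ≤ i → p < σ p := by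
      intro m
      induction m using Nat.strong_induction_on with
      | _ m ih =>
        intro p hpm hpw hpi
        by_contra hle
        rw [not_lt] at hle
        have hbp := hbf p hpi hpw
        have hwp : w (σ p) = w p := le_antisymm (hw hle) (hf p ▸ (hA (σ p)).1 hbp)
        by_cases hfirst : ∀ u, w u = w (σ p) → σ p ≤ u
        · exact (hA (σ p)).2.2 hfirst (Prod.ext (by rw [hf, hwp]) hbp)
        · push Not at hfirst
          obtain ⟨u, hu1, hu2⟩ := hfirst
          have hup : (u : ℕ) < p := lt_of_lt_of_le hu2 hle
          have hpn := p.2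
          let p' : Fin n := ⟨p - 1, by omega⟩
          have hp'p : p' < p := by simp only [p', Fin.lt_def]; omega
          have hup' : u ≤ p' := by simp only [p', Fin.le_def]; omega
          have hwp' : w p' = w p := hbw u p' p hup' hp'p.le (hu1.trans hwp)
          have h1 := ih (p' : ℕ) (hpm ▸ hp'p) p' rfl (hwp'.trans hpw) (hp'p.le.trans hpi)
          have h2 : σ p' < σ p := by
            rcases strictMono_cases H hp'p with h | ⟨_, h | ⟨_, h⟩⟩
            · exact absurd hwp' h.ne
            · rw [hbp] at h; exact absurd h (by simp)
            · exact h
          simp only [p', Fin.lt_def, Fin.le_def] at h1 h2 hle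
          omega
    exact key _ i rfl rfl le_rfl
  · rw [notExc_true]
    by_contra hlt
    rw [not_le] at hlt
    have hbt : ∀ p, i ≤ p → w p = w i → (g (σ p)).2 = true := by
      intro p hp hpw
      rcases hp.lt_or_eq with h | rfl
      · rcases strictMono_cases H h with h1 | ⟨_, h1 | ⟨h1, _⟩⟩
        · exact absurd hpw h1.ne'
        · rw [hb] at h1; exact absurd h1 (by simp [Bool.lt_iff])
        · rw [← h1, hb]
      · exact hb
    -- From `i` to the end of the block, the sorted letters are all equal, so `σ` increases there.
    have key : ∀ m : ℕ, ∀ p : Fin n, (p : ℕ) = i + m → w p = w i → p < σ p := by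
      intro m
      induction m with
      | zero =>
        intro p hp _
        have : p = i := Fin.ext hp
        rwa [this]
      | succ m ih =>
        intro p hp hpw
        have hpn := p.2
        let p' : Fin n := ⟨i + m, by omega⟩
        have hp'p : p' < p := by simp only [p', Fin.lt_def]; omega
        have hip' : i ≤ p' := by simp only [p', Fin.le_def]; omega
        have hwp' : w p' = w p := hbw i p' p hip' hp'p.le hpw.symm
        have h1 := ih p' rfl (hwp'.trans hpw)
        have h2 : σ p' < σ p := by
          rcases strictMono_cases H hp'p with h | ⟨_, h | ⟨_, h⟩⟩
          · exact absurd hwp' h.ne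
          · rw [hbt p' hip' (hwp'.trans hpw)] at h; exact absurd h (by simp [Bool.lt_iff])
          · exact h
        simp only [p', Fin.lt_def] at h1 h2 ⊢
        omega
    -- The last position of the block of `i` would be sent outside the block.
    let B := Finset.univ.filter fun p => i ≤ p ∧ w p = w i
    have hB : B.Nonempty := ⟨i, by simp [B]⟩
    have he := Finset.max'_mem B hB
    set e := B.max' hB
    simp only [B, Finset.mem_filter, Finset.mem_univ, true_and] at he
    have hlt' := key (e - i) e (by have := Fin.le_def.1 he.1; omega) he.2
    have hwe : w (σ e) ≤ w e := hf e ▸ (hA (σ e)).2.1 (hbt e he.1 he.2)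
    have hmem : σ e ∈ B := by
      simp only [B, Finset.mem_filter, Finset.mem_univ, true_and]
      exact ⟨he.1.trans hlt'.le, (le_antisymm hwe (hw hlt'.le)).trans he.2⟩
    exact absurd (Finset.le_max' B _ hmem) (not_le.2 hlt')

lemma wordOf_permOf {w : Fin n → Fin M} (hw : Monotone w) {g : Fin n → Fin M × Bool}
    (hA : Allowed w g) (hc : cont (fun v => (g v).1) = cont w) : wordOf w (permOf g) = g := by
  funext v
  obtain ⟨i, rfl⟩ := (permOf g).surjective v
  rw [wordOf_apply, notExc_permOf hw hA hc, ← permOf_fst hw hc]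

lemma strictMono_permOf {w : Fin n → Fin M} (hw : Monotone w) {g : Fin n → Fin M × Bool}
    (hA : Allowed w g) (hc : cont (fun v => (g v).1) = cont w) :
    StrictMono fun i => toLex (w i, toLex (notExc (permOf g) i, permOf g i)) := by
  have H := permOf_eq_iff.1 (rfl : permOf g = permOf g)
  simpa only [notExc_permOf hw hA hc, permOf_fst hw hc] using H

lemma exc_eq (w : Fin n → Fin M) (σ : Equiv.Perm (Fin n)) :
    exc n σ = (Finset.univ.filter fun v => (wordOf w σ v).2 = false).card := by
  have h1 : exc n σ = ∑ i : Fin n, if notExc σ i = false then 1 else 0 := by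
    rw [exc, Finset.card_filter, Finset.sum_range]
    simp only [notExc_false, Fin.lt_def, Fin.eta, Fin.is_lt, exists_true_left]
  rw [h1, Finset.card_filter, ← Equiv.sum_comp σ fun v => if (wordOf w σ v).2 = false then 1 else 0]
  simp only [wordOf_apply]

/-- Fixed points are the positions of the terminal runs of unbarred `k` in the blocks `k`: between a
fixed point (or the start of such a run) and the end of the block, `σ` is an injection moving
positions only weakly in one direction, hence the identity. -/
lemma fix_iff_trailing {w : Fin n → Fin M} (hw : Monotone w) {σ : Equiv.Perm (Fin n)}
    (H : StrictMono fun i => toLex (w i, toLex (notExc σ i, σ i))) (v : Fin n) :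
    σ v = v ↔ Trailing w (wordOf w σ) v := by
  have hbw : ∀ a b c : Fin n, a ≤ b → b ≤ c → w a = w c → w b = w c := fun a b c h1 h2 h3 =>
    le_antisymm (hw h2) (h3 ▸ hw h1)
  constructor
  · intro hv
    have hvt : notExc σ v = true := notExc_true.2 hv.le
    have key : ∀ m : ℕ, ∀ u : Fin n, (u : ℕ) = m → v ≤ u → w u = w v → σ u = u := by
      intro m
      induction m using Nat.strong_induction_on with
      | _ m ih =>
        intro u hum hvu hwu
        rcases hvu.lt_or_eq with hlt | rfl
        · have h2 : notExc σ u = true ∧ σ v < σ u := by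
            rcases strictMono_cases H hlt with h | ⟨_, h | ⟨h, h'⟩⟩
            · exact absurd hwu h.ne'
            · rw [hvt] at h; exact absurd h (by simp [Bool.lt_iff])
            · exact ⟨h ▸ hvt, h'⟩
          by_contra hne
          have hlt' : σ u < u := lt_of_le_of_ne (notExc_true.1 h2.1) hne
          have hvs : v ≤ σ u := hv ▸ h2.2.le
          exact hne (σ.injective (ih _ (hum ▸ hlt') (σ u) rfl hvs
            (by rw [← hwu]; exact hbw v _ u hvs hlt'.le hwu.symm)))
        · exact hv
    have key : ∀ u, v ≤ u → w u = w v → σ u = u := fun u => key _ u rfl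
    intro u hu hwu
    have h1 := wordOf_apply w σ u
    rw [key u hu hwu] at h1
    rw [h1, Prod.mk.injEq]
    exact ⟨rfl, notExc_true.2 (key u hu hwu).le⟩
  · intro hT
    have hT' : ∀ u, v ≤ u → w u = w v → w (σ.symm u) = w v ∧ u ≤ σ.symm u := by
      intro u hu hwu
      have h := hT u hu hwu
      simp only [wordOf, Prod.mk.injEq] at h
      exact ⟨h.1.trans hwu, by simpa using notExc_true.1 h.2⟩
    have key : ∀ m : ℕ, ∀ u : Fin n, n - (u : ℕ) = m → v ≤ u → w u = w v → σ.symm u = u := by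
      intro m
      induction m using Nat.strong_induction_on with
      | _ m ih =>
        intro u hum hvu hwu
        obtain ⟨h1, h2⟩ := hT' u hvu hwu
        by_contra hne
        have hlt : u < σ.symm u := lt_of_le_of_ne h2 (Ne.symm hne)
        have hlt' := Fin.lt_def.1 hlt
        have := (σ.symm u).2
        exact hne (σ.symm.injective (ih _ (by omega) (σ.symm u) rfl (hvu.trans h2) h1))
    have := key _ v rfl le_rfl rfl
    exact (σ.symm_apply_eq.1 this).symm

lemma cont_wordOf (w : Fin n → Fin M) (σ : Equiv.Perm (Fin n)) :
    cont (fun v => (wordOf w σ v).1) = cont w := cont_comp w σ.symm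

/-- `wordOf` and `permOf` are inverse bijections between the permutations whose `DEX` set is
compatible with `w` and the allowed words with the content of `w`. -/
lemma sum_perm_eq {K : Type*} [CommRing K] {w : Fin n → Fin M} (hw : Monotone w) (s r : K) :
    (∑ σ : Equiv.Perm (Fin n), if Compat (DEX σ) w then s ^ exc n σ * r ^ fixpts n σ else 0) =
      ∑ g : Fin n → Fin M × Bool, if Allowed w g ∧ cont (fun v => (g v).1) = cont w then
        s ^ (Finset.univ.filter fun v => (g v).2 = false).card *
          r ^ (Finset.univ.filter fun v => Trailing w g v).card else 0 := by
  rw [← Finset.sum_filter, ← Finset.sum_filter]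
  refine Finset.sum_bij' (fun σ _ => wordOf w σ) (fun g _ => permOf g) ?_ ?_ ?_ ?_ ?_
  · intro σ _
    simp only [Finset.mem_filter, Finset.mem_univ, true_and]
    exact ⟨allowed_wordOf hw σ, cont_wordOf w σ⟩
  · intro g hg
    simp only [Finset.mem_filter, Finset.mem_univ, true_and] at hg ⊢
    rw [compat_DEX_iff]
    exact strictMono_permOf hw hg.1 hg.2
  · intro σ hσ
    simp only [Finset.mem_filter, Finset.mem_univ, true_and, compat_DEX_iff] at hσ
    exact permOf_wordOf hσ
  · intro g hg
    simp only [Finset.mem_filter, Finset.mem_univ, true_and] at hg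
    exact wordOf_permOf hw hg.1 hg.2
  · intro σ hσ
    simp only [Finset.mem_filter, Finset.mem_univ, true_and, compat_DEX_iff] at hσ
    rw [exc_eq w, fixpts]
    simp only [fix_iff_trailing hw hσ]

end Words

/-! ### Counting allowed words block by block -/

section Blocks

variable {E : Type*} [CommRing E] {M : ℕ}

/-- The letter `a` may occur in block `k`: barred letters are at most `k`, unbarred at least `k`. -/
def OkLetter (k : Fin M) (a : Fin M × Bool) : Prop :=
  (a.2 = false → a.1 ≤ k) ∧ (a.2 = true → k ≤ a.1)

/-- The weight of a letter: `x j` if it is unbarred, `s * x j` if it is barred. -/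
def wt (s : E) (x : Fin M → E) (a : Fin M × Bool) : E := if a.2 then x a.1 else s * x a.1

lemma sum_ok_wt (s : E) (x : Fin M → E) (k : Fin M) :
    (∑ a, if OkLetter k a then wt s x a else 0) = Lf s x k := by
  rw [Fintype.sum_prod_type]
  simp only [OkLetter, wt, Fintype.sum_bool, Lf, Finset.sum_add_distrib, Finset.mul_sum]
  simp only [Bool.true_eq_false, false_imp_iff, true_imp_iff, true_and, Bool.false_eq_true,
    if_false, if_true, and_true]
  rw [add_comm]
  congr 1
  · rw [← Finset.sum_filter]
    exact Finset.sum_congr (by ext; simp) fun _ _ => rfl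
  · rw [← Finset.sum_filter]
    exact Finset.sum_congr (by ext; simp) fun _ _ => rfl

/-- Contribution of position `v` to the weight of a word in block `k`, without the condition on the
first letter: `0` if the letter is not permitted, and an extra factor `r` in the terminal run of
unbarred `k`. -/
noncomputable def freeFactor (s r : E) (x : Fin M → E) (k : Fin M) {ι : Type*} [LE ι]
    (h : ι → Fin M × Bool) (v : ι) : E :=
  if OkLetter k (h v) then
    wt s x (h v) * if ∀ u, v ≤ u → h u = (k, true) then r else 1
  else 0

/-- As `freeFactor`, but `0` if `v` is the first position and carries `k` barred. -/
noncomputable def blockFactor (s r : E) (x : Fin M → E) (k : Fin M) {ι : Type*} [LE ι]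
    (h : ι → Fin M × Bool) (v : ι) : E :=
  if (∀ u, v ≤ u) → h v ≠ (k, false) then freeFactor s r x k h v else 0

lemma forall_cons {c : ℕ} (k : Fin M) (a : Fin M × Bool) (h : Fin c → Fin M × Bool) (v : Fin c) :
    (∀ u, v.succ ≤ u → (Fin.cons a h : Fin (c + 1) → Fin M × Bool) u = (k, true)) ↔
      ∀ u, v ≤ u → h u = (k, true) := by
  rw [Fin.forall_fin_succ]
  simp [Fin.succ_le_succ_iff]

lemma freeFactor_succ (s r : E) (x : Fin M → E) (k : Fin M) {c : ℕ} (a : Fin M × Bool)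
    (h : Fin c → Fin M × Bool) (v : Fin c) :
    freeFactor s r x k (Fin.cons a h : Fin (c + 1) → Fin M × Bool) v.succ =
      freeFactor s r x k h v := by
  simp only [freeFactor, forall_cons, Fin.cons_succ]
  congr

lemma freeFactor_zero (s r : E) (x : Fin M → E) (k : Fin M) {c : ℕ} (a : Fin M × Bool)
    (h : Fin c → Fin M × Bool) :
    freeFactor s r x k (Fin.cons a h : Fin (c + 1) → Fin M × Bool) 0 =
      (if OkLetter k a then wt s x a else 0) +
        if a = (k, true) then (if ∀ u, h u = (k, true) then (r - 1) * x k else 0) else 0 := by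
  have h1 : (∀ u, (0 : Fin (c + 1)) ≤ u →
      (Fin.cons a h : Fin (c + 1) → Fin M × Bool) u = (k, true)) ↔
        a = (k, true) ∧ ∀ u, h u = (k, true) := by
    simp [Fin.forall_fin_succ]
  simp only [freeFactor, h1, Fin.cons_zero]
  by_cases ha : a = (k, true)
  · subst ha
    by_cases hh : ∀ u, h u = (k, true)
    · simp [OkLetter, wt, hh]; ring
    · simp [OkLetter, wt, hh]
  · simp [ha]

lemma prod_freeFactor_const (s r : E) (x : Fin M → E) (k : Fin M) (c : ℕ) :
    ∏ v, freeFactor s r x k (fun _ : Fin c => (k, true)) v = r ^ c * x k ^ c := by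
  simp [freeFactor, OkLetter, wt, mul_pow, mul_comm]

lemma sum_first (s r : E) (x : Fin M → E) (k : Fin M) {c : ℕ} (h : Fin c → Fin M × Bool) :
    ∑ a, freeFactor s r x k (Fin.cons a h : Fin (c + 1) → Fin M × Bool) 0 =
      Lf s x k + if ∀ u, h u = (k, true) then (r - 1) * x k else 0 := by
  simp only [freeFactor_zero, Finset.sum_add_distrib, sum_ok_wt]
  simp

lemma sum_freeFactor (s r : E) (x : Fin M → E) (k : Fin M) (c : ℕ) :
    ∑ h : Fin c → Fin M × Bool, ∏ v, freeFactor s r x k h v = Nw r (Lf s x k) (x k) c := by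
  induction c with
  | zero => simp [Nw]
  | succ c ih =>
    rw [← (Fin.consEquiv fun _ : Fin (c + 1) => Fin M × Bool).sum_comp, Fintype.sum_prod_type_right]
    have hs : ∀ a (h : Fin c → Fin M × Bool),
        (Fin.consEquiv fun _ : Fin (c + 1) => Fin M × Bool) (a, h) =
          (Fin.cons a h : Fin (c + 1) → Fin M × Bool) := fun _ _ => rfl
    simp only [hs, Fin.prod_univ_succ, freeFactor_succ, ← Finset.sum_mul, sum_first, add_mul,
      Finset.sum_add_distrib, ← Finset.mul_sum, ih, Nw]
    congr 1
    rw [Finset.sum_eq_single fun _ => (k, true)]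
    · simp [prod_freeFactor_const]; ring
    · intro h _ hh
      rw [if_neg fun h' => hh (funext h'), zero_mul]
    · simp

lemma sum_blockFactor_fin (s r : E) (x : Fin M → E) (k : Fin M) (c : ℕ) :
    ∑ h : Fin c → Fin M × Bool, ∏ v, blockFactor s r x k h v =
      Zw s r (Lf s x k) (x k) c := by
  cases c with
  | zero => simp [Zw]
  | succ c =>
    rw [← (Fin.consEquiv fun _ : Fin (c + 1) => Fin M × Bool).sum_comp, Fintype.sum_prod_type_right]
    have hs : ∀ a (h : Fin c → Fin M × Bool),
        (Fin.consEquiv fun _ : Fin (c + 1) => Fin M × Bool) (a, h) =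
          (Fin.cons a h : Fin (c + 1) → Fin M × Bool) := fun _ _ => rfl
    have h0 : ∀ a (h : Fin c → Fin M × Bool),
        blockFactor s r x k (Fin.cons a h : Fin (c + 1) → Fin M × Bool) 0 =
          freeFactor s r x k (Fin.cons a h : Fin (c + 1) → Fin M × Bool) 0 -
            if a = (k, false) then s * x k else 0 := by
      intro a h
      by_cases ha : a = (k, false)
      · subst ha
        simp [blockFactor, freeFactor_zero, OkLetter, wt]
      · simp [blockFactor, ha]
    have h1 : ∀ a (h : Fin c → Fin M × Bool) (v : Fin c),
        blockFactor s r x k (Fin.cons a h : Fin (c + 1) → Fin M × Bool) v.succ =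
          freeFactor s r x k h v := by
      intro a h v
      rw [blockFactor, if_pos, freeFactor_succ]
      intro h
      exact absurd (h 0) (by simp)
    have h2 := sum_freeFactor s r x k (c + 1)
    rw [← (Fin.consEquiv fun _ : Fin (c + 1) => Fin M × Bool).sum_comp,
      Fintype.sum_prod_type_right] at h2
    simp only [hs, Fin.prod_univ_succ, freeFactor_succ] at h2
    simp only [hs, Fin.prod_univ_succ, h0, h1, sub_mul, Finset.sum_sub_distrib, h2, Zw]
    congr 1
    simp [← Finset.mul_sum, sum_freeFactor]

lemma sum_blockFactor (s r : E) (x : Fin M → E) (k : Fin M) (ι : Type*) [Fintype ι]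
    [LinearOrder ι] :
    ∑ h : ι → Fin M × Bool, ∏ v, blockFactor s r x k h v =
      Zw s r (Lf s x k) (x k) (Fintype.card ι) := by
  rw [← sum_blockFactor_fin]
  let e : Fin (Fintype.card ι) ≃o ι := (Fintype.orderIsoFinOfCardEq ι rfl)
  refine Fintype.sum_equiv (e.symm.toEquiv.arrowCongr (Equiv.refl _)) _ _ fun h => ?_
  refine (Fintype.prod_equiv e.toEquiv _ _ fun v => ?_).symm
  have : ∀ p : ι → Prop, (∀ u, p u) ↔ ∀ u, p (e u) := fun p =>
    e.toEquiv.forall_congr_right.symm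
  simp only [blockFactor, freeFactor, this]
  simp

/-- A word is the same as a family of words, one on each block of `w`. -/
def fiberEquiv {n : ℕ} (w : Fin n → Fin M) (A : Type*) :
    (Fin n → A) ≃ ((k : Fin M) → {v // w v = k} → A) where
  toFun g k v := g v
  invFun h v := h (w v) ⟨v, rfl⟩
  left_inv g := rfl
  right_inv h := by
    funext k ⟨v, hv⟩
    subst hv
    rfl

lemma sum_allowed {n : ℕ} (s r : E) (x : Fin M → E) (w : Fin n → Fin M) :
    (∑ g : Fin n → Fin M × Bool, if Allowed w g then
      (∏ v, wt s x (g v)) * r ^ (Finset.univ.filter fun v => Trailing w g v).card else 0) =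
      ∏ k, Zw s r (Lf s x k) (x k) (cont w k) := by
  have hcard : ∀ k, cont w k = Fintype.card {v // w v = k} := by
    intro k
    rw [cont_apply, Fintype.card_subtype]
  simp only [hcard, ← sum_blockFactor]
  rw [Finset.prod_univ_sum]
  refine Eq.trans ?_ (Finset.sum_congr (s₁ := Finset.univ) (by ext; simp) fun _ _ => rfl)
  refine Fintype.sum_equiv (fiberEquiv w _) _ _ fun g => ?_
  have h1 : ∀ v : Fin n, blockFactor s r x (w v) (fiberEquiv w _ g (w v)) ⟨v, rfl⟩ =
      if (((g v).2 = false → (g v).1 ≤ w v) ∧ ((g v).2 = true → w v ≤ (g v).1) ∧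
        ((∀ u, w u = w v → v ≤ u) → g v ≠ (w v, false))) then
          wt s x (g v) * if Trailing w g v then r else 1 else 0 := by
    intro v
    have a1 : (∀ u : {u // w u = w v}, (⟨v, rfl⟩ : {u // w u = w v}) ≤ u →
        g u = (w v, true)) ↔ Trailing w g v :=
      ⟨fun h u hu hwu => by rw [hwu]; exact h ⟨u, hwu⟩ hu,
        fun h u hu => (h u hu u.2).trans (Prod.ext u.2 rfl)⟩
    have a2 : (∀ u : {u // w u = w v}, (⟨v, rfl⟩ : {u // w u = w v}) ≤ u) ↔
        ∀ u, w u = w v → v ≤ u := ⟨fun h u hwu => h ⟨u, hwu⟩, fun h u => h u u.2⟩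
    simp only [blockFactor, freeFactor, fiberEquiv, Equiv.coe_fn_mk, OkLetter, a1, a2,
      ← ite_and]
    refine if_congr ?_ ?_ rfl
    · tauto
    · congr
  have h2 : ∏ k, ∏ v, blockFactor s r x k (fiberEquiv w _ g k) v =
      ∏ v : Fin n, blockFactor s r x (w v) (fiberEquiv w _ g (w v)) ⟨v, rfl⟩ := by
    rw [← Fintype.prod_fiberwise w]
    refine Finset.prod_congr rfl fun k _ => Fintype.prod_congr _ _ fun v => ?_
    obtain ⟨v, rfl⟩ := v
    rfl
  rw [h2]
  simp only [h1]
  rw [Finset.prod_ite_zero]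
  simp only [Finset.mem_univ, true_imp_iff, Allowed, Finset.prod_mul_distrib, Finset.prod_ite,
    Finset.prod_const, one_pow, mul_one]
  congr

end Blocks

/-! ### Proof of the recurrence -/

section Assembly

variable {K : Type*} [CommRing K] {M : ℕ}

lemma prod_wt {n : ℕ} (s : K) (g : Fin n → Fin M × Bool) :
    ∏ v, wt (MvPolynomial.C s) (MvPolynomial.X (R := K)) (g v) =
      MvPolynomial.C (s ^ (Finset.univ.filter fun v => (g v).2 = false).card) *
        MvPolynomial.monomial (cont fun v => (g v).1) 1 := by
  have h : ∀ a : Fin M × Bool, wt (MvPolynomial.C s) (MvPolynomial.X (R := K)) a =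
      (if a.2 = false then MvPolynomial.C s else 1) * MvPolynomial.X a.1 := by
    rintro ⟨j, b⟩
    cases b <;> simp [wt]
  simp only [h, Finset.prod_mul_distrib]
  congr 1
  · rw [Finset.prod_ite, Finset.prod_const, Finset.prod_const_one, mul_one, map_pow]
  · rw [cont, MvPolynomial.monomial_sum_one]
    rfl

lemma sum_perm_eq_aco {n : ℕ} {w : Fin n → Fin M} (hw : Monotone w) (s r : K) :
    (∑ σ : Equiv.Perm (Fin n), if Compat (DEX σ) w then s ^ exc n σ * r ^ fixpts n σ else 0) =
      aco s r (cont w) := by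
  rw [sum_perm_eq hw, aco, ← sum_allowed, MvPolynomial.coeff_sum]
  refine Finset.sum_congr rfl fun g _ => ?_
  by_cases hA : Allowed w g
  · simp only [hA, true_and, if_true, prod_wt]
    rw [mul_right_comm, ← map_pow, ← map_mul, MvPolynomial.coeff_C_mul,
      MvPolynomial.coeff_monomial]
    split_ifs <;> simp
  · simp [hA]

lemma compat_empty_iff {n : ℕ} (w : Fin n → Fin M) : Compat ∅ w ↔ Monotone w := by
  cases n with
  | zero => exact ⟨fun _ a => a.elim0, fun _ i h => by omega⟩
  | succ n =>
    rw [Fin.monotone_iff_le_succ]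
    constructor
    · exact fun H i => (H i (by omega)).1
    · exact fun H i h => ⟨H ⟨i, by omega⟩, by simp⟩

lemma Compat.monotone {n : ℕ} {S : Finset ℕ} {w : Fin n → Fin M} (h : Compat S w) : Monotone w :=
  (compat_empty_iff w).1 fun i hi => ⟨(h i hi).1, by simp⟩

lemma exists_cont_eq (n : ℕ) (c : Fin M →₀ ℕ) (hc : ∑ k, c k = n) :
    ∃ w : Fin n → Fin M, Monotone w ∧ cont w = c := by
  obtain ⟨f, hf⟩ : ∃ f : Fin n → Fin M, cont f = c := by
    obtain ⟨l, hl⟩ := Quot.exists_rep (Finsupp.toMultiset c)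
    have hlen : l.length = n := by
      have h1 := congrArg Multiset.card hl
      rw [Finsupp.card_toMultiset] at h1
      rw [← hc]
      refine Eq.trans h1 ?_
      rw [Finsupp.sum_fintype _ _ (by simp)]
      rfl
    subst hlen
    refine ⟨l.get, ?_⟩
    ext k
    have h2 : Multiset.map l.get Finset.univ.val = Finsupp.toMultiset c := by
      rw [Fin.univ_val_map, List.ofFn_get]
      exact hl
    have h3 := congrArg (Multiset.count k) h2
    rw [Finsupp.count_toMultiset, Multiset.count_map] at h3
    rw [cont_apply, ← h3]
    simp only [Finset.card_def, Finset.filter_val, eq_comm]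
  exact ⟨f ∘ Tuple.sort f, Tuple.monotone_sort f, (cont_comp f _).trans hf⟩

lemma Scon_eq_sum_monotone (ω : Fin M → K) (φ : (Fin M →₀ ℕ) → K) (n : ℕ) :
    Scon ω φ n = ∑ w : Fin n → Fin M,
      if Monotone w then (∏ i, ω (w i)) * φ (cont w) else 0 := by
  rw [← Finset.sum_filter, Scon]
  symm
  refine Finset.sum_bij (fun w _ => cont w) ?_ ?_ ?_ ?_
  · intro w _
    rw [Finset.mem_finsuppAntidiag]
    refine ⟨?_, by simp⟩
    have : ∀ k, cont w k = ∑ i, if w i = k then 1 else 0 := by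
      intro k
      rw [cont_apply, Finset.card_filter]
    simp only [this]
    rw [Finset.sum_comm]
    simp
  · intro w hw w' hw' h
    simp only [Finset.mem_filter, Finset.mem_univ, true_and] at hw hw'
    exact eq_of_cont_eq hw hw' h
  · intro c hc
    rw [Finset.mem_finsuppAntidiag] at hc
    obtain ⟨w, h1, h2⟩ := exists_cont_eq n c hc.1
    exact ⟨w, by simpa using h1, h2⟩
  · intro w _
    congr 1
    rw [← Fintype.prod_fiberwise w]
    refine Finset.prod_congr rfl fun k _ => ?_
    rw [cont_apply, ← Fintype.card_subtype, ← Finset.card_univ, ← Finset.prod_const]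
    exact Finset.prod_congr rfl fun v _ => by rw [v.2]

/-- The `q`-Eulerian polynomial with the major index rewritten by `maj_eq`, where `s` stands for
`t * q`. -/
noncomputable def Aq (q s r : K) (n : ℕ) : K :=
  ∑ σ : Equiv.Perm (Fin n), s ^ exc n σ * r ^ fixpts n σ *
    q ^ (∑ i ∈ Finset.range (n - 1), if i ∈ DEX σ then i + 1 else 0)

lemma Scon_aco_eq (s r : K) (ω : Fin M → K) (n : ℕ) :
    Scon ω (aco s r) n = ∑ σ : Equiv.Perm (Fin n), s ^ exc n σ * r ^ fixpts n σ *
      ∑ w : Fin n → Fin M, if Compat (DEX σ) w then ∏ i, ω (w i) else 0 := by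
  rw [Scon_eq_sum_monotone]
  simp only [Finset.mul_sum]
  rw [Finset.sum_comm]
  refine Finset.sum_congr rfl fun w _ => ?_
  split_ifs with hw
  · rw [← sum_perm_eq_aco hw, Finset.mul_sum]
    refine Finset.sum_congr rfl fun σ _ => ?_
    split_ifs <;> ring
  · refine (Finset.sum_eq_zero fun σ _ => ?_).symm
    rw [if_neg fun h : Compat (DEX σ) w => hw h.monotone, mul_zero]

lemma dvd_Scon_aco (q s r : K) (M n : ℕ) :
    q ^ M ∣ qpoch q n * Scon (fun k : Fin M => q ^ (M - 1 - (k : ℕ))) (aco s r) n - Aq q s r n := by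
  rw [Scon_aco_eq, Aq, Finset.mul_sum, ← Finset.sum_sub_distrib]
  refine Finset.dvd_sum fun σ _ => ?_
  have h := (dvd_sum_compat q M (DEX σ) n).mul_left (s ^ exc n σ * r ^ fixpts n σ)
  rw [mul_sub] at h
  convert h using 1
  ring

lemma dvd_Scon_one (q : K) (M n : ℕ) :
    q ^ M ∣ qpoch q n * Scon (fun k : Fin M => q ^ (M - 1 - (k : ℕ))) (fun _ => 1) n - 1 := by
  have h := dvd_sum_compat q M ∅ n
  simpa [Scon_eq_sum_monotone, compat_empty_iff] using h

lemma qbinom_zero_right (q : K) (n : ℕ) : qbinom q n 0 = 1 := by cases n <;> rfl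

lemma qbinom_eq_zero (q : K) (n k : ℕ) (h : n < k) : qbinom q n k = 0 := by
  induction n generalizing k with
  | zero => cases k with
    | zero => omega
    | succ k => rfl
  | succ n ih => cases k with
    | zero => omega
    | succ k => rw [qbinom, ih k (by omega), ih (k + 1) (by omega)]; ring

lemma qbinom_self (q : K) (n : ℕ) : qbinom q n n = 1 := by
  induction n with
  | zero => rfl
  | succ n ih => rw [qbinom, ih, qbinom_eq_zero q n (n + 1) (by omega)]; ring

lemma qpoch_succ (q : K) (n : ℕ) : qpoch q (n + 1) = qpoch q n * (1 - q ^ (n + 1)) :=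
  Finset.prod_range_succ _ _

/-- The factorization `[i + j choose i]_q (q)_i (q)_j = (q)_{i+j}`, free of division. -/
lemma qbinom_mul (q : K) (i j : ℕ) :
    qbinom q (i + j) i * (qpoch q i * qpoch q j) = qpoch q (i + j) := by
  obtain ⟨N, hN⟩ : ∃ N, i + j = N := ⟨_, rfl⟩
  induction N generalizing i j with
  | zero =>
    obtain ⟨rfl, rfl⟩ : i = 0 ∧ j = 0 := by omega
    simp [qbinom, qpoch]
  | succ N ih =>
    cases i with
    | zero => simp [qbinom_zero_right, qpoch]
    | succ i =>
      cases j with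
      | zero => simp [qbinom_self, qpoch]
      | succ j =>
        have h1 := ih i (j + 1) (by omega)
        have h2 := ih (i + 1) j (by omega)
        have e1 : i + 1 + (j + 1) = (i + (j + 1)) + 1 := by ring
        have e2 : i + 1 + j = i + (j + 1) := by ring
        rw [e2] at h2
        rw [e1, qbinom, qpoch_succ q (i + (j + 1)), add_mul]
        have h3 : qpoch q (i + 1) * qpoch q (j + 1) =
            (1 - q ^ (i + 1)) * (qpoch q i * qpoch q (j + 1)) := by rw [qpoch_succ q i]; ring
        have h4 : qpoch q (i + 1) * qpoch q (j + 1) =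
            (1 - q ^ (j + 1)) * (qpoch q (i + 1) * qpoch q j) := by rw [qpoch_succ q j]; ring
        have h5 : qbinom q (i + (j + 1)) i * (qpoch q (i + 1) * qpoch q (j + 1)) =
            (1 - q ^ (i + 1)) * qpoch q (i + (j + 1)) := by rw [h3, ← h1]; ring
        have h6 : q ^ (i + 1) * qbinom q (i + (j + 1)) (i + 1) *
            (qpoch q (i + 1) * qpoch q (j + 1)) =
            q ^ (i + 1) * (1 - q ^ (j + 1)) * qpoch q (i + (j + 1)) := by rw [h4, ← h2]; ring
        rw [h5, h6]
        ring

/-- The recurrence modulo `q ^ (m + 1)`, from an alphabet of `m + 1` letters: multiply `Scon_aco` by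
`qpoch q n` and apply `dvd_Scon_aco` and `dvd_Scon_one`. -/
lemma dvd_recurrence (q s r : K) (n m : ℕ) :
    q ^ (m + 1) ∣ ∑ p ∈ Finset.HasAntidiagonal.antidiagonal n,
        qbinom q n p.1 * Aq q s r p.1 * (s ^ p.2 - s) - (1 - s) * r ^ n := by
  have hS := Scon_aco s r (fun k : Fin (m + 1) => q ^ (m + 1 - 1 - (k : ℕ))) n
  have hA := fun i => dvd_Scon_aco q s r (m + 1) i
  have h1 := fun i => dvd_Scon_one q (m + 1) i
  simp only [← Ideal.mem_span_singleton, ← Ideal.Quotient.mk_eq_mk_iff_sub_mem] at hA h1 ⊢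
  set π := Ideal.Quotient.mk (Ideal.span {q ^ (m + 1)})
  have hS := congrArg (fun z => π (qpoch q n * z)) hS
  simp only at hS
  have hR : π (qpoch q n * ((1 - s) * r ^ n *
      Scon (fun k : Fin (m + 1) => q ^ (m + 1 - 1 - (k : ℕ))) (fun _ => 1) n)) =
        π ((1 - s) * r ^ n) := by
    have := h1 n
    rw [show qpoch q n * ((1 - s) * r ^ n *
      Scon (fun k : Fin (m + 1) => q ^ (m + 1 - 1 - (k : ℕ))) (fun _ => 1) n) =
      (1 - s) * r ^ n * (qpoch q n *
      Scon (fun k : Fin (m + 1) => q ^ (m + 1 - 1 - (k : ℕ))) (fun _ => 1) n) by ring,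
      map_mul, this, map_one, mul_one]
  rw [← hR, ← hS, Finset.mul_sum, map_sum, map_sum]
  refine Finset.sum_congr rfl fun p hp => ?_
  rw [Finset.HasAntidiagonal.mem_antidiagonal] at hp
  obtain ⟨i, j⟩ := p
  simp only at hp ⊢
  subst hp
  have a := hA i
  have b := h1 j
  rw [map_mul] at a b
  rw [map_one] at b
  rw [← qbinom_mul]
  simp only [map_mul, ← a]
  linear_combination (-(π (qbinom q (i + j) i) * π (qpoch q i) *
    π (Scon (fun k : Fin (m + 1) => q ^ (m + 1 - 1 - (k : ℕ))) (aco s r) i) *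
    π (s ^ j - s))) * b

end Assembly

lemma qEulerPolyFix_eq_Aq (n : ℕ) : qEulerPolyFix n = Aq qv (tv * qv) rv n := by
  refine Finset.sum_congr rfl fun σ _ => ?_
  rw [maj_eq, pow_add, mul_pow]
  ring

lemma not_isUnit_qv : ¬ IsUnit qv := fun h => by
  have := h.map (MvPolynomial.eval (fun _ : Fin 3 => (0 : ℤ)))
  simp [qv] at this

lemma eq_zero_of_qv_pow_dvd (P : Rqtr) (h : ∀ m : ℕ, qv ^ (m + 1) ∣ P) : P = 0 := by
  by_contra hP
  obtain ⟨m, hm⟩ := FiniteMultiplicity.of_not_isUnit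
    not_isUnit_qv hP
  exact hm (h m)

lemma one_sub_tq_ne_zero : (1 - tv * qv : Rqtr) ≠ 0 := by
  intro h
  have := congrArg (MvPolynomial.eval (fun _ : Fin 3 => (0 : ℤ))) h
  simp [tv, qv] at this

/-- The recurrence
`A_n = r^n + Σ_{k=0}^{n−2} [n choose k]_q A_k · tq[n−k−1]_{tq}`. -/
theorem qEulerian_recurrence (n : ℕ) :
    qEulerPolyFix n =
      rv ^ n + ∑ k ∈ Finset.range (n - 1),
        qbinom qv n k * qEulerPolyFix k * (tv * qv * qint (tv * qv) (n - k - 1)) := by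
  set s := tv * qv with hs
  have h := sub_eq_zero.1 (eq_zero_of_qv_pow_dvd _ fun m => dvd_recurrence qv s rv n m)
  rw [Finset.Nat.sum_antidiagonal_eq_sum_range_succ
    (fun i j => qbinom qv n i * Aq qv s rv i * (s ^ j - s))] at h
  simp only [hs, ← qEulerPolyFix_eq_Aq] at h
  rw [← hs] at h
  apply mul_left_cancel₀ one_sub_tq_ne_zero
  rw [← hs]
  cases n with
  | zero => simpa [qbinom, mul_comm] using h
  | succ n =>
    rw [Finset.sum_range_succ, Finset.sum_range_succ, qbinom_self] at h
    have e : n + 1 - n = 1 := by omega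
    have hsum : (1 - s) * ∑ k ∈ Finset.range (n + 1 - 1),
        qbinom qv (n + 1) k * qEulerPolyFix k * (s * qint s (n + 1 - k - 1)) =
        -∑ k ∈ Finset.range n, qbinom qv (n + 1) k * qEulerPolyFix k * (s ^ (n + 1 - k) - s) := by
      rw [Nat.add_sub_cancel, Finset.mul_sum, ← Finset.sum_neg_distrib]
      refine Finset.sum_congr rfl fun k hk => ?_
      have hk := Finset.mem_range.1 hk
      have hg := mul_neg_geom_sum s (n + 1 - k - 1)
      rw [← qint] at hg
      have e2 : n + 1 - k = (n + 1 - k - 1) + 1 := by omega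
      rw [show s ^ (n + 1 - k) = s ^ (n + 1 - k - 1) * s by rw [← pow_succ, ← e2]]
      linear_combination (qbinom qv (n + 1) k * qEulerPolyFix k * s) * hg
    rw [mul_add, hsum, ← h]
    simp only [e, Nat.sub_self]
    ring
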